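/- Up to isomorphism, the oddly (4)-bipancyclic graphs on v vertices with at most v + 4 edges are: exactly 2 of order 9 and exactly 5 of order 13; in particular every such graph has v ∈ {9, 13}. -/

import Mathlib

open SimpleGraph

/-- The number of cycles of length `k` in `G`, counted as subgraphs of `G`
isomorphic to the cycle graph `C_k`. -/
noncomputable def cycleCount {V : Type*} (G : SimpleGraph V) (k : ℕ) : ℕ :=
  {H : G.Subgraph | Nonempty (H.coe ≃g cycleGraph k)}.ncard

/-- A bipartite graph on an odd number `v` of vertices with minimum degree at least `2`
is oddly `(r)`-bipancyclic if it contains precisely `r` cycles of each even length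
from `4` to `v - 1`. -/
def IsOddlyRBipancyclic {V : Type*} [Fintype V] (G : SimpleGraph V) (r : ℕ) : Prop :=
  G.Colorable 2 ∧ Odd (Fintype.card V) ∧ (∀ x : V, 2 ≤ (G.neighborSet x).ncard) ∧
    ∀ k : ℕ, 4 ≤ k → k ≤ Fintype.card V - 1 → Even k → cycleCount G k = r

/-- There are, up to isomorphism, exactly `N` graphs on `v` vertices with at most
`b` edges satisfying the given pancyclicity property with parameter `r`. -/
def ExactlyNUpToIso (r N v b : ℕ) : Prop :=
  ∃ Gs : Fin N → SimpleGraph (Fin v),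
    (∀ i j : Fin N, i ≠ j → IsEmpty (Gs i ≃g Gs j)) ∧
    (∀ i : Fin N, IsOddlyRBipancyclic (Gs i) r ∧ (Gs i).edgeSet.ncard ≤ b) ∧
    (∀ (W : Type) [Fintype W] (G : SimpleGraph W), Fintype.card W = v →
      G.edgeSet.ncard ≤ b → IsOddlyRBipancyclic G r → ∃ i : Fin N, Nonempty (G ≃g Gs i))

/-!
Let `G` be such a graph with `2 * m + 1` vertices. A cycle of length `2 * m` misses a single vertex
`x`, and two neighbors of `x` on that cycle turn it into a theta graph, so `G` is a theta graph with
at most three further edges. The cycle space of `G` has dimension at most `5`; it contains the empty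
set and `4 * (m - 1)` cycles, whence `m ≤ 8`. This leaves finitely many graphs, which are searched
by adding the further edges one at a time to a theta graph and updating the numbers of 4-cycles and
6-cycles: they never decrease, so a graph is discarded as soon as one of them exceeds four. The
solutions found are identified by explicit isomorphisms, and the remaining ones are told apart by an
invariant of their degrees.
-/

namespace OddlyBipancyclic

section Cycles

variable {V W : Type*} {n : ℕ}

/-- The edge set of the closed polygon `f 0, f 1, …, f (n + 2), f 0`. Indices are taken in
`Fin (n + 3)`, so that `i + 1` wraps around and only cycle lengths at least `3` occur. -/
def cycleEdges (f : Fin (n + 3) → V) : Set (Sym2 V) :=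
  Set.range fun i => s(f i, f (i + 1))

/-- The edge sets of the cycles of length `n + 3` of `G`. A cycle is determined by its edges, so
counting these sets is counting cycles as subgraphs. -/
def cycleEdgeSets (G : SimpleGraph V) (n : ℕ) : Set (Set (Sym2 V)) :=
  cycleEdges '' {f : Fin (n + 3) → V | f.Injective ∧ ∀ i, G.Adj (f i) (f (i + 1))}

lemma cycleEdges_subset_edgeSet_iff {G : SimpleGraph V} {f : Fin (n + 3) → V} :
    cycleEdges f ⊆ G.edgeSet ↔ ∀ i, G.Adj (f i) (f (i + 1)) := by
  simp [cycleEdges, Set.range_subset_iff]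

lemma subset_edgeSet_of_mem_cycleEdgeSets {G : SimpleGraph V} {E : Set (Sym2 V)}
    (hE : E ∈ cycleEdgeSets G n) : E ⊆ G.edgeSet := by
  obtain ⟨f, ⟨-, hadj⟩, rfl⟩ := hE
  exact cycleEdges_subset_edgeSet_iff.2 hadj

lemma cycleEdgeSets_mono {G H : SimpleGraph V} (h : G ≤ H) :
    cycleEdgeSets G n ⊆ cycleEdgeSets H n :=
  Set.image_mono fun _ hf => ⟨hf.1, fun i => h (hf.2 i)⟩

lemma cycleEdgeSets_finite {G : SimpleGraph V} (hG : G.edgeSet.Finite) :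
    (cycleEdgeSets G n).Finite :=
  hG.finite_subsets.subset fun _ => subset_edgeSet_of_mem_cycleEdgeSets

lemma cycleEdges_comp (g : V → W) (f : Fin (n + 3) → V) :
    cycleEdges (g ∘ f) = Sym2.map g '' cycleEdges f := by
  simp only [cycleEdges, ← Set.range_comp, Function.comp_def, Sym2.map_mk]

lemma edgeSet_cycleGraph : (cycleGraph (n + 3)).edgeSet = cycleEdges id := by
  ext e
  induction e using Sym2.ind with
  | _ i j =>
    simp only [mem_edgeSet, cycleEdges, Set.mem_range, id, Sym2.eq_iff]
    rw [cycleGraph_adj (n := n + 1)]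
    constructor
    · rintro (h | h)
      · exact ⟨j, .inr ⟨rfl, by rw [← h]; abel⟩⟩
      · exact ⟨i, .inl ⟨rfl, by rw [← h]; abel⟩⟩
    · rintro ⟨k, ⟨rfl, rfl⟩ | ⟨rfl, rfl⟩⟩ <;> simp

lemma edgeSet_toSubgraph_cycleGraph {G : SimpleGraph V} (c : Copy (cycleGraph (n + 3)) G) :
    c.toSubgraph.edgeSet = cycleEdges c := by
  simp only [Copy.toSubgraph, Subgraph.edgeSet_map, Subgraph.edgeSet_top, edgeSet_cycleGraph,
    ← cycleEdges_comp]
  rfl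

lemma verts_toSubgraph_cycleGraph {G : SimpleGraph V} (c : Copy (cycleGraph (n + 3)) G) :
    c.toSubgraph.verts = {v | ∃ e ∈ c.toSubgraph.edgeSet, v ∈ e} := by
  ext v
  constructor
  · rintro ⟨i, -, rfl⟩
    rw [edgeSet_toSubgraph_cycleGraph]
    exact ⟨_, ⟨i, rfl⟩, Sym2.mem_mk_left _ _⟩
  · rintro ⟨e, he, hv⟩
    rw [edgeSet_toSubgraph_cycleGraph] at he
    obtain ⟨i, rfl⟩ := he
    rcases Sym2.mem_iff.1 hv with rfl | rfl
    exacts [⟨i, trivial, rfl⟩, ⟨i + 1, trivial, rfl⟩]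

lemma adj_cycleGraph_add_one (i : Fin (n + 3)) : (cycleGraph (n + 3)).Adj i (i + 1) := by
  rw [cycleGraph_adj (n := n + 1)]
  simp

lemma cycleCount_eq_ncard_cycleEdgeSets (G : SimpleGraph V) (n : ℕ) :
    cycleCount G (n + 3) = (cycleEdgeSets G n).ncard := by
  have hcycles : {H : G.Subgraph | Nonempty (H.coe ≃g cycleGraph (n + 3))} =
      Set.range (Copy.toSubgraph (A := cycleGraph (n + 3)) (B := G)) := by
    rw [Copy.range_toSubgraph]
    exact Set.ext fun H => ⟨fun ⟨φ⟩ => ⟨φ.symm⟩, fun ⟨φ⟩ => ⟨φ.symm⟩⟩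
  have himage : cycleEdgeSets G n = Subgraph.edgeSet ''
      Set.range (Copy.toSubgraph (A := cycleGraph (n + 3)) (B := G)) := by
    simp only [← Set.range_comp, Function.comp_def, edgeSet_toSubgraph_cycleGraph]
    ext E
    constructor
    · rintro ⟨f, ⟨hf, hadj⟩, rfl⟩
      have hhom : ∀ {i j}, (cycleGraph (n + 3)).Adj i j → G.Adj (f i) (f j) := fun {i j} hij => by
        rw [← mem_edgeSet, edgeSet_cycleGraph] at hij
        rw [← mem_edgeSet]
        refine cycleEdges_subset_edgeSet_iff.2 hadj ?_
        rw [← Function.comp_id f, cycleEdges_comp]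
        exact Set.mem_image_of_mem (Sym2.map f) hij
      exact ⟨⟨⟨f, hhom⟩, hf⟩, rfl⟩
    · rintro ⟨c, rfl⟩
      exact ⟨c, ⟨c.injective, fun i => c.toHom.map_adj (adj_cycleGraph_add_one i)⟩, rfl⟩
  rw [cycleCount, hcycles, himage, Set.InjOn.ncard_image]
  rintro _ ⟨c, rfl⟩ _ ⟨d, rfl⟩ h
  refine Subgraph.ext ?_ ?_
  · rw [verts_toSubgraph_cycleGraph, verts_toSubgraph_cycleGraph, h]
  · ext a b
    rw [← Subgraph.mem_edgeSet, h, Subgraph.mem_edgeSet]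

lemma ncard_cycleEdgeSets_map (G : SimpleGraph V) (g : V ↪ W) (n : ℕ) :
    (cycleEdgeSets (G.map g) n).ncard = (cycleEdgeSets G n).ncard := by
  have himage : cycleEdgeSets (G.map g) n = Set.image (Sym2.map g) '' cycleEdgeSets G n := by
    ext E
    simp only [cycleEdgeSets, Set.image_image, ← cycleEdges_comp]
    constructor
    · rintro ⟨f, ⟨hf, hadj⟩, rfl⟩
      have hrange : ∀ i, ∃ a, g a = f i := fun i => by
        obtain ⟨a, -, -, ha, -⟩ := (map_adj _ _ _ _).1 (hadj i)
        exact ⟨a, ha⟩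
      choose f' hf' using hrange
      obtain rfl : g ∘ f' = f := funext hf'
      exact ⟨f', ⟨hf.of_comp, fun i => by simpa using hadj i⟩, rfl⟩
    · rintro ⟨f, ⟨hf, hadj⟩, rfl⟩
      exact ⟨g ∘ f, ⟨g.injective.comp hf, fun i => by simpa using hadj i⟩, rfl⟩
  rw [himage, Set.ncard_image_of_injective]
  exact Set.image_injective.2 (Sym2.map.injective g.injective)

lemma cycleCount_map (G : SimpleGraph V) (g : V ↪ W) (n : ℕ) :
    cycleCount (G.map g) (n + 3) = cycleCount G (n + 3) := by
  simp only [cycleCount_eq_ncard_cycleEdgeSets, ncard_cycleEdgeSets_map]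

lemma cycleEdges_inter_incident {f : Fin (n + 3) → V} (hf : f.Injective) (i : Fin (n + 3)) :
    {e ∈ cycleEdges f | f i ∈ e} = {s(f i, f (i - 1)), s(f i, f (i + 1))} := by
  ext e
  simp only [cycleEdges, Set.mem_ofPred_eq, Set.mem_range, Set.mem_insert_iff,
    Set.mem_singleton_iff]
  constructor
  · rintro ⟨⟨j, rfl⟩, hj⟩
    rcases Sym2.mem_iff.1 hj with hij | hij
    · exact .inr (by rw [hf hij])
    · exact .inl (by rw [hf hij, add_sub_cancel_right, Sym2.eq_swap])
  · rintro (rfl | rfl)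
    · exact ⟨⟨i - 1, by rw [sub_add_cancel, Sym2.eq_swap]⟩, Sym2.mem_mk_left _ _⟩
    · exact ⟨⟨i, rfl⟩, Sym2.mem_mk_left _ _⟩

lemma add_one_ne_sub_one (i : Fin (n + 3)) : i + 1 ≠ i - 1 := by
  rw [Ne, eq_sub_iff_add_eq, add_assoc, add_eq_left]
  simp [Fin.ext_iff, Fin.val_add, Nat.mod_eq_of_lt]

/-- From two consecutive vertices on, a cycle can be traced through its edge set. -/
lemma eq_of_cycleEdges_eq {f g : Fin (n + 3) → V} (hf : f.Injective) (hg : g.Injective)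
    (h : cycleEdges f = cycleEdges g) (hlast : f (-1) = g (-1)) (hzero : f 0 = g 0) : f = g := by
  suffices htrace : ∀ i, f (i - 1) = g (i - 1) ∧ f i = g i from funext fun i => (htrace i).2
  intro i
  induction i using Fin.induction with
  | zero => simpa using ⟨hlast, hzero⟩
  | succ i ih =>
    obtain ⟨hprev, hcur⟩ := ih
    have hmem : s(f i.castSucc, f (i.castSucc + 1)) ∈ {e ∈ cycleEdges g | g i.castSucc ∈ e} := by
      rw [← h, ← hcur]
      exact ⟨⟨_, rfl⟩, Sym2.mem_mk_left _ _⟩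
    rw [cycleEdges_inter_incident hg, ← hcur, ← hprev] at hmem
    simp only [Set.mem_insert_iff, Set.mem_singleton_iff, Sym2.congr_right] at hmem
    rw [← Fin.coeSucc_eq_succ, add_sub_cancel_right]
    exact ⟨hcur, hmem.resolve_left fun hback => add_one_ne_sub_one _ (hf hback)⟩

end Cycles

section AddEdge

variable {V : Type*} {G : SimpleGraph V} {u w : V} {n : ℕ}

/-- The lists of interior vertices of the paths from `u` to `w` that have `k` interior vertices,
none of which lies in `S`. -/
def pathInteriors (G : SimpleGraph V) (w : V) (k : ℕ) (u : V) (S : Set V) : Set (List V) :=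
  {l | l.length = k ∧ l.Nodup ∧ (∀ a ∈ l, a ∉ S) ∧ (u :: (l ++ [w])).IsChain G.Adj}

/-- The vertex sequences of the paths from `u` to `w` with `n + 2` edges. -/
def pathTuples (G : SimpleGraph V) (n : ℕ) (u w : V) : Set (Fin (n + 3) → V) :=
  {f | f.Injective ∧ f 0 = u ∧ f (Fin.last _) = w ∧ (List.ofFn f).IsChain G.Adj}

lemma exists_ofFn_eq {m : ℕ} {l : List V} (hl : l.length = m) :
    ∃ f : Fin m → V, List.ofFn f = l := by
  subst hl
  exact ⟨l.get, List.ofFn_get l⟩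

lemma ofFn_eq_cons_append (f : Fin (n + 3) → V) :
    List.ofFn f = f 0 :: (List.ofFn (fun i : Fin (n + 1) => f i.succ.castSucc) ++
      [f (Fin.last _)]) := by
  rw [List.ofFn_succ, List.ofFn_succ', List.concat_eq_append]
  rfl

lemma nodup_cons_append_singleton_iff {l : List V} :
    (u :: (l ++ [w])).Nodup ↔ u ≠ w ∧ l.Nodup ∧ ∀ a ∈ l, a ∉ ({u, w} : Set V) := by
  simp only [List.nodup_cons, List.nodup_append, List.mem_append, List.mem_singleton, not_or,
    Set.mem_insert_iff, Set.mem_singleton_iff]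
  grind

lemma image_ofFn_pathTuples (huw : u ≠ w) : List.ofFn '' pathTuples G n u w =
    (fun l => u :: (l ++ [w])) '' pathInteriors G w (n + 1) u {u, w} := by
  ext L
  constructor
  · rintro ⟨f, ⟨hf, rfl, rfl, hchain⟩, rfl⟩
    rw [ofFn_eq_cons_append] at hchain ⊢
    rw [← List.nodup_ofFn, ofFn_eq_cons_append, nodup_cons_append_singleton_iff] at hf
    exact ⟨_, ⟨List.length_ofFn, hf.2.1, hf.2.2, hchain⟩, rfl⟩
  · rintro ⟨l, ⟨hlen, hnodup, havoid, hchain⟩, rfl⟩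
    obtain ⟨f, hf⟩ := exists_ofFn_eq (l := u :: (l ++ [w])) (m := n + 3) (by simp [hlen])
    refine ⟨f, ⟨?_, ?_, ?_, hf ▸ hchain⟩, hf⟩
    · rw [← List.nodup_ofFn, hf]
      exact nodup_cons_append_singleton_iff.2 ⟨huw, hnodup, havoid⟩
    · exact (List.cons.inj (ofFn_eq_cons_append f ▸ hf)).1
    · have htail := (List.cons.inj (ofFn_eq_cons_append f ▸ hf)).2
      simpa using (List.append_inj htail (by simp [hlen])).2

lemma ncard_pathTuples (huw : u ≠ w) :
    (pathTuples G n u w).ncard = (pathInteriors G w (n + 1) u {u, w}).ncard := by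
  rw [← Set.ncard_image_of_injective _ List.ofFn_injective, image_ofFn_pathTuples huw,
    Set.ncard_image_of_injective]
  intro l l' h
  simpa using h

lemma cycleEdges_rotate (f : Fin (n + 3) → V) (j : Fin (n + 3)) :
    cycleEdges (fun i => f (j + i)) = cycleEdges f := by
  refine Set.Subset.antisymm ?_ ?_
  · rintro _ ⟨i, rfl⟩
    exact ⟨j + i, by simp only [add_assoc]⟩
  · rintro _ ⟨i, rfl⟩
    exact ⟨i - j, by simp only [← add_assoc, add_sub_cancel]⟩

lemma cycleEdges_reflect (f : Fin (n + 3) → V) (j : Fin (n + 3)) :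
    cycleEdges (fun i => f (j - i)) = cycleEdges f := by
  refine Set.Subset.antisymm ?_ ?_
  · rintro _ ⟨i, rfl⟩
    exact ⟨j - (i + 1), by
      beta_reduce
      rw [Sym2.eq_swap]
      congr 3
      abel⟩
  · rintro _ ⟨i, rfl⟩
    exact ⟨j - (i + 1), by
      beta_reduce
      rw [Sym2.eq_swap]
      congr 3 <;> abel⟩

lemma exists_cycleEdges_eq_of_mem {f : Fin (n + 3) → V} (hf : f.Injective)
    (h : s(u, w) ∈ cycleEdges f) :
    ∃ g : Fin (n + 3) → V, g.Injective ∧ g 0 = u ∧ g (-1) = w ∧ cycleEdges g = cycleEdges f := by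
  obtain ⟨j, hj⟩ := h
  rcases Sym2.eq_iff.1 hj with ⟨hu, hw⟩ | ⟨hw, hu⟩
  · exact ⟨fun i => f (j - i), hf.comp (sub_right_injective), by simpa using hu,
      by simpa using hw, cycleEdges_reflect f j⟩
  · exact ⟨fun i => f (j + 1 + i), hf.comp (add_right_injective _), by simpa using hu,
      by simpa using hw, cycleEdges_rotate f _⟩

lemma edgeSet_sup_edge (huw : u ≠ w) : (G ⊔ edge u w).edgeSet = insert s(u, w) G.edgeSet := by
  rw [edgeSet_sup, edgeSet_edge_of_ne huw, Set.union_singleton]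

lemma last_eq_neg_one : Fin.last (n + 2) = -1 :=
  eq_neg_iff_add_eq_zero.2 (Fin.last_add_one _)

lemma isChain_ofFn_iff_forall_ne (f : Fin (n + 3) → V) :
    (List.ofFn f).IsChain G.Adj ↔ ∀ i ≠ -1, G.Adj (f i) (f (i + 1)) := by
  rw [← last_eq_neg_one, List.isChain_ofFn]
  refine ⟨fun h i hi => ?_, fun h i hi => ?_⟩
  · obtain ⟨j, rfl⟩ := Fin.exists_castSucc_eq.2 hi
    rw [Fin.coeSucc_eq_succ]
    exact h j (Nat.succ_lt_succ j.2)
  · have := h (Fin.castSucc ⟨i, Nat.succ_lt_succ_iff.1 hi⟩) (Fin.castSucc_ne_last _)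
    rwa [Fin.coeSucc_eq_succ] at this

lemma image_cycleEdges_pathTuples (huw : u ≠ w) (hG : ¬ G.Adj u w) :
    cycleEdges '' pathTuples G n u w = cycleEdgeSets (G ⊔ edge u w) n \ cycleEdgeSets G n := by
  simp only [pathTuples, isChain_ofFn_iff_forall_ne, last_eq_neg_one]
  refine Set.Subset.antisymm ?_ ?_
  · rintro _ ⟨f, ⟨hf, rfl, rfl, hadj⟩, rfl⟩
    refine ⟨⟨f, ⟨hf, fun i => ?_⟩, rfl⟩, fun hE => hG ?_⟩
    · rcases eq_or_ne i (-1) with rfl | hi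
      · rw [neg_add_cancel, ← mem_edgeSet, edgeSet_sup_edge huw, Sym2.eq_swap]
        exact Set.mem_insert _ _
      · exact .inl (hadj i hi)
    · refine (mem_edgeSet G).1 (subset_edgeSet_of_mem_cycleEdgeSets hE ⟨-1, ?_⟩)
      simpa only [neg_add_cancel] using Sym2.eq_swap
  · rintro _ ⟨⟨f, ⟨hf, hadj⟩, rfl⟩, hnot⟩
    rw [← cycleEdges_subset_edgeSet_iff, edgeSet_sup_edge huw] at hadj
    have hmem : s(u, w) ∈ cycleEdges f := by
      by_contra hmem
      exact hnot ⟨f, ⟨hf, cycleEdges_subset_edgeSet_iff.1 fun e he =>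
        (hadj he).resolve_left (by rintro rfl; exact hmem he)⟩, rfl⟩
    obtain ⟨g, hg, rfl, rfl, hgf⟩ := exists_cycleEdges_eq_of_mem hf hmem
    refine ⟨g, ⟨hg, rfl, rfl, fun i hi => ?_⟩, hgf⟩
    rw [← hgf] at hadj
    refine (hadj ⟨i, rfl⟩).resolve_left fun hclosing => ?_
    rcases Sym2.eq_iff.1 hclosing with ⟨hi0, hi1⟩ | ⟨hi1, -⟩
    · obtain rfl := hg hi0
      exact add_one_ne_sub_one 0 ((hg hi1).trans (zero_sub 1).symm)
    · exact hi (hg hi1)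

lemma ncard_cycleEdgeSets_sup_edge (hfin : G.edgeSet.Finite) (huw : u ≠ w) (hG : ¬ G.Adj u w)
    (n : ℕ) : (cycleEdgeSets (G ⊔ edge u w) n).ncard =
      (cycleEdgeSets G n).ncard + (pathInteriors G w (n + 1) u {u, w}).ncard := by
  have hinj : Set.InjOn cycleEdges (pathTuples G n u w) := by
    rintro f ⟨hf, hf0, hfw, -⟩ g ⟨hg, hg0, hgw, -⟩ h
    rw [last_eq_neg_one] at hfw hgw
    exact eq_of_cycleEdges_eq hf hg h (hfw.trans hgw.symm) (hf0.trans hg0.symm)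
  have hfin' : (G ⊔ edge u w).edgeSet.Finite := by
    rw [edgeSet_sup_edge huw]
    exact hfin.insert _
  rw [← ncard_pathTuples huw, ← hinj.ncard_image, image_cycleEdges_pathTuples huw hG, add_comm,
    Set.ncard_sdiff_add_ncard_of_subset (cycleEdgeSets_mono le_sup_left)
      (cycleEdgeSets_finite hfin')]

end AddEdge

section PathRecursion

variable {V : Type*} {G : SimpleGraph V} {u w : V}

lemma pathInteriors_one (S : Set V) : pathInteriors G w 1 u S =
    (fun a => [a]) '' {a | G.Adj u a ∧ G.Adj w a ∧ a ∉ S} := by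
  ext l
  constructor
  · rintro ⟨hlen, -, havoid, hchain⟩
    obtain ⟨a, rfl⟩ := List.length_eq_one_iff.1 hlen
    simp only [List.cons_append, List.nil_append, List.isChain_cons_cons,
      List.isChain_singleton, and_true] at hchain
    exact ⟨a, ⟨hchain.1, hchain.2.symm, havoid a (List.mem_singleton_self a)⟩, rfl⟩
  · rintro ⟨a, ⟨hua, hwa, ha⟩, rfl⟩
    exact ⟨rfl, List.nodup_singleton a, by simpa using ha, by simpa using ⟨hua, hwa.symm⟩⟩

lemma pathInteriors_succ (k : ℕ) (S : Set V) : pathInteriors G w (k + 1) u S =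
    ⋃ a ∈ {a | G.Adj u a ∧ a ∉ S}, List.cons a '' pathInteriors G w k a (insert a S) := by
  ext l
  simp only [Set.mem_iUnion, Set.mem_image]
  constructor
  · rintro ⟨hlen, hnodup, havoid, hchain⟩
    obtain ⟨a, l, rfl⟩ := List.exists_cons_of_length_eq_add_one hlen
    rw [List.cons_append, List.isChain_cons_cons] at hchain
    rw [List.nodup_cons] at hnodup
    refine ⟨a, ⟨hchain.1, havoid a List.mem_cons_self⟩, l,
      ⟨Nat.succ_injective hlen, hnodup.2, fun b hb => ?_, hchain.2⟩, rfl⟩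
    rw [Set.mem_insert_iff, not_or]
    exact ⟨fun hba => hnodup.1 (hba ▸ hb), havoid b (List.mem_cons_of_mem a hb)⟩
  · rintro ⟨a, ⟨hua, ha⟩, l, ⟨hlen, hnodup, havoid, hchain⟩, rfl⟩
    refine ⟨congrArg Nat.succ hlen, List.nodup_cons.2 ⟨fun hal => ?_, hnodup⟩, ?_,
      List.isChain_cons_cons.2 ⟨hua, hchain⟩⟩
    · exact havoid a hal (Set.mem_insert a S)
    · rintro b (_ | ⟨_, hb⟩)
      exacts [ha, fun hbS => havoid b hb (Set.mem_insert_of_mem a hbS)]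

lemma encard_pathInteriors_one {N : Finset V} {S : Set V}
    (hN : ∀ a, a ∈ N ↔ G.Adj u a ∧ G.Adj w a ∧ a ∉ S) :
    (pathInteriors G w 1 u S).encard = N.card := by
  have hset : {a | G.Adj u a ∧ G.Adj w a ∧ a ∉ S} = N := Set.ext fun a => (hN a).symm
  rw [pathInteriors_one, hset, Function.Injective.encard_image fun a b => by simp,
    Set.encard_coe_eq_coe_finsetCard]

lemma encard_pathInteriors_succ {N : Finset V} {S : Set V} (k : ℕ)
    (hN : ∀ a, a ∈ N ↔ G.Adj u a ∧ a ∉ S) :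
    (pathInteriors G w (k + 1) u S).encard =
      ∑ a ∈ N, (pathInteriors G w k a (insert a S)).encard := by
  have hset : {a | G.Adj u a ∧ a ∉ S} = N := Set.ext fun a => (hN a).symm
  rw [pathInteriors_succ, hset, N.finite_toSet.encard_biUnion, finsum_mem_coe_finset]
  · exact Finset.sum_congr rfl fun a _ => List.cons_injective.encard_image _
  · intro a _ b _ hab
    refine Set.disjoint_left.2 ?_
    rintro _ ⟨l, -, rfl⟩ ⟨l', -, h⟩
    exact hab (List.cons.inj h).1.symm

end PathRecursion

section Bitmaps

/-- The sum of `f i` over the bits `i` set in `M`, provided that at most `n` bits are set. It is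
written with `Nat.rec` rather than by pattern matching because the kernel evaluates it about
twice as fast this way: the inner recursion reduces `M` to a literal. -/
def sumBits (f : ℕ → ℕ) (n : ℕ) : ℕ → ℕ :=
  Nat.rec (motive := fun _ => ℕ → ℕ) (fun _ => 0)
    (fun _ ih M => Nat.rec (motive := fun _ => ℕ) 0
      (fun p _ => f (p + 1).log2 + ih ((p + 1) ^^^ 1 <<< (p + 1).log2)) M) n

/-- Row `u` of the adjacency bitmap `A`, which stores the adjacency matrix of a graph on
`{0, …, 31}` with the entry `(u, w)` in bit `32 * u + w`. -/
def row (A u : ℕ) : ℕ :=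
  (A >>> (32 * u)) &&& 4294967295

/-- The difference of two sets encoded by their bits. -/
def bitDiff (A B : ℕ) : ℕ :=
  A ^^^ (A &&& B)

/-- The adjacency bitmap `A` with the edge `e` added. -/
def addEdge (A : ℕ) (e : ℕ × ℕ) : ℕ :=
  A ||| 1 <<< (32 * e.1 + e.2) ||| 1 <<< (32 * e.2 + e.1)

/-- The number of paths from `u` to `w` with `k + 1` interior vertices, none of them in the set
encoded by `avoid`, in the graph with adjacency bitmap `A`. The last two steps of the path are
taken together, as a choice of a common neighbor. -/
def countPaths (A w k : ℕ) : ℕ → ℕ → ℕ :=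
  Nat.rec (motive := fun _ => ℕ → ℕ → ℕ)
    (fun u avoid => sumBits (fun _ => 1) 32 (bitDiff (row A u &&& row A w) avoid))
    (fun _ ih u avoid =>
      sumBits (fun a => ih a (avoid ||| 1 <<< a)) 32 (bitDiff (row A u) avoid)) k

lemma countPaths_zero (A w u avoid : ℕ) : countPaths A w 0 u avoid =
    sumBits (fun _ => 1) 32 (bitDiff (row A u &&& row A w) avoid) :=
  rfl

lemma countPaths_succ (A w k u avoid : ℕ) : countPaths A w (k + 1) u avoid =
    sumBits (fun a => countPaths A w k a (avoid ||| 1 <<< a)) 32 (bitDiff (row A u) avoid) :=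
  rfl

/-- The number of cycles of length `k` created by adding the edge `e` to the graph with adjacency
bitmap `A`. -/
def newCycles (k A : ℕ) (e : ℕ × ℕ) : ℕ :=
  countPaths A e.2 (k - 3) e.1 (1 <<< e.1 ||| 1 <<< e.2)

lemma toFinset_bitIndices_clear_log2 (p : ℕ) :
    ((p + 1) ^^^ 1 <<< (p + 1).log2).bitIndices.toFinset =
      (p + 1).bitIndices.toFinset.erase (p + 1).log2 := by
  ext i
  have htop : (p + 1).testBit (p + 1).log2 = true := Nat.testBit_log2 p.succ_ne_zero
  by_cases hi : (p + 1).log2 = i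
  · subst hi
    simp [Nat.one_shiftLeft, htop]
  · simp [Nat.one_shiftLeft, hi, Ne.symm hi]

lemma mem_toFinset_bitIndices {M i : ℕ} : i ∈ M.bitIndices.toFinset ↔ M.testBit i = true := by
  simp

lemma log2_mem_bitIndices (p : ℕ) : (p + 1).log2 ∈ (p + 1).bitIndices.toFinset :=
  mem_toFinset_bitIndices.2 (Nat.testBit_log2 p.succ_ne_zero)

lemma sumBits_eq_sum (f : ℕ → ℕ) {n M : ℕ} (h : M.bitIndices.toFinset.card ≤ n) :
    sumBits f n M = ∑ i ∈ M.bitIndices.toFinset, f i := by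
  induction n generalizing M with
  | zero => rw [Finset.card_eq_zero.1 (Nat.le_zero.1 h)]; rfl
  | succ n ih =>
    cases M with
    | zero => rfl
    | succ p =>
      have hrec : sumBits f (n + 1) (p + 1) =
        f (p + 1).log2 + sumBits f n ((p + 1) ^^^ 1 <<< (p + 1).log2) := rfl
      rw [hrec, ih, toFinset_bitIndices_clear_log2,
        Finset.add_sum_erase _ _ (log2_mem_bitIndices p)]
      rw [toFinset_bitIndices_clear_log2, Finset.card_erase_of_mem (log2_mem_bitIndices p)]
      exact Nat.sub_le_of_le_add h

lemma testBit_row (A u i : ℕ) :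
    (row A u).testBit i = (decide (i < 32) && A.testBit (32 * u + i)) := by
  rw [row, show (4294967295 : ℕ) = 2 ^ 32 - 1 by norm_num, Nat.testBit_and,
    Nat.testBit_shiftRight, Nat.testBit_two_pow_sub_one, Bool.and_comm]

lemma testBit_bitDiff (A B i : ℕ) :
    (bitDiff A B).testBit i = (A.testBit i && !B.testBit i) := by
  rw [bitDiff, Nat.testBit_xor, Nat.testBit_and]
  cases A.testBit i <;> cases B.testBit i <;> rfl

lemma setOf_testBit_or_one_shiftLeft (M a : ℕ) :
    {i | (M ||| 1 <<< a).testBit i = true} = insert a {i | M.testBit i = true} := by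
  ext i
  simp [Nat.one_shiftLeft, Nat.testBit_two_pow, or_comm, @eq_comm _ a i]

/-- `A` is the adjacency bitmap of `G`; in particular, all edges of `G` lie in `{0, …, 31}`. -/
def IsBitmap (A : ℕ) (G : SimpleGraph ℕ) : Prop :=
  ∀ u w, (row A u).testBit w = true ↔ G.Adj u w

lemma isBitmap_zero : IsBitmap 0 ⊥ := by
  simp [IsBitmap, testBit_row]

variable {A : ℕ} {G : SimpleGraph ℕ}

lemma IsBitmap.sup_edge (h : IsBitmap A G) {u w : ℕ} (hu : u < 32) (hw : w < 32) (huw : u ≠ w) :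
    IsBitmap (addEdge A (u, w)) (G ⊔ edge u w) := by
  intro a b
  have hedge : b < 32 ∧ (32 * u + w = 32 * a + b ∨ 32 * w + u = 32 * a + b) ↔
      (a = u ∧ b = w ∨ a = w ∧ b = u) ∧ a ≠ b := by omega
  rw [sup_adj, edge_adj, ← h a b, testBit_row, testBit_row, ← hedge]
  simp only [addEdge, Nat.one_shiftLeft, Nat.testBit_or, Nat.testBit_two_pow, Bool.and_eq_true,
    Bool.or_eq_true, decide_eq_true_eq]
  rw [or_assoc, and_or_left]

lemma IsBitmap.card_bitIndices_le (h : IsBitmap A G) {u M : ℕ}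
    (hM : ∀ i, M.testBit i = true → G.Adj u i) : M.bitIndices.toFinset.card ≤ 32 := by
  refine (Finset.card_le_card (t := Finset.range 32) fun i hi => ?_).trans_eq
    (Finset.card_range 32)
  have hadj := (h u i).2 (hM i (by simpa using hi))
  rw [testBit_row, Bool.and_eq_true, decide_eq_true_eq] at hadj
  exact Finset.mem_range.2 hadj.1

lemma IsBitmap.encard_pathInteriors (h : IsBitmap A G) (w k u avoid : ℕ) :
    (pathInteriors G w (k + 1) u {i | avoid.testBit i = true}).encard =
      countPaths A w k u avoid := by
  induction k generalizing u avoid with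
  | zero =>
    set M := bitDiff (row A u &&& row A w) avoid with hM
    have hmem : ∀ i, M.testBit i = true ↔ G.Adj u i ∧ G.Adj w i ∧ ¬ avoid.testBit i = true := by
      intro i
      rw [← h u i, ← h w i, hM, testBit_bitDiff, Nat.testBit_and]
      simp [and_assoc]
    have hcount : countPaths A w 0 u avoid = M.bitIndices.toFinset.card := by
      rw [Finset.card_eq_sum_ones, countPaths_zero]
      exact sumBits_eq_sum _ (h.card_bitIndices_le fun i hi => ((hmem i).1 hi).1)
    have hN := fun i => mem_toFinset_bitIndices.trans (hmem i)
    rw [hcount, encard_pathInteriors_one (S := {i | avoid.testBit i = true}) hN]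
  | succ k ih =>
    set M := bitDiff (row A u) avoid with hM
    have hmem : ∀ i, M.testBit i = true ↔ G.Adj u i ∧ ¬ avoid.testBit i = true := by
      intro i
      rw [← h u i, hM, testBit_bitDiff]
      simp
    have hcount : countPaths A w (k + 1) u avoid =
        ∑ a ∈ M.bitIndices.toFinset, countPaths A w k a (avoid ||| 1 <<< a) := by
      rw [countPaths_succ]
      exact sumBits_eq_sum _ (h.card_bitIndices_le fun i hi => ((hmem i).1 hi).1)
    have hN := fun i => mem_toFinset_bitIndices.trans (hmem i)
    rw [hcount, encard_pathInteriors_succ (S := {i | avoid.testBit i = true}) (k + 1) hN,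
      Nat.cast_sum]
    exact Finset.sum_congr rfl fun a _ => by rw [← setOf_testBit_or_one_shiftLeft, ih]

lemma IsBitmap.ncard_cycleEdgeSets_sup_edge (h : IsBitmap A G) (hG : G.edgeSet.Finite)
    {u w : ℕ} (huw : u ≠ w) (hadj : ¬ G.Adj u w) (n : ℕ) :
    (cycleEdgeSets (G ⊔ edge u w) n).ncard =
      (cycleEdgeSets G n).ncard + newCycles (n + 3) A (u, w) := by
  have hset : ({u, w} : Set ℕ) = {i | (1 <<< u ||| 1 <<< w).testBit i = true} := by
    ext i
    simp [Nat.one_shiftLeft, Nat.testBit_two_pow, @eq_comm _ i]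
  have hpaths : (pathInteriors G w (n + 1) u {u, w}).ncard = newCycles (n + 3) A (u, w) := by
    rw [hset, Set.ncard, h.encard_pathInteriors]
    rfl
  rw [OddlyBipancyclic.ncard_cycleEdgeSets_sup_edge hG huw hadj, hpaths]

end Bitmaps

section EdgeLists

/-- The graph whose edges are the entries of a list. New edges are consed onto the list. -/
def graphOf : List (ℕ × ℕ) → SimpleGraph ℕ
  | [] => ⊥
  | e :: L => graphOf L ⊔ edge e.1 e.2

/-- The adjacency bitmap of `graphOf L`. -/
def bitmapOf : List (ℕ × ℕ) → ℕ
  | [] => 0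
  | e :: L => addEdge (bitmapOf L) e

/-- The number of cycles of length `k` of `graphOf L`: each cycle is counted when its newest edge
is added. -/
def countCycles (k : ℕ) : List (ℕ × ℕ) → ℕ
  | [] => 0
  | e :: L => countCycles k L + newCycles k (bitmapOf L) e

/-- `L` lists the edges of a loopless graph on `{0, …, 31}` without repetition. -/
def IsEdgeList (L : List (ℕ × ℕ)) : Prop :=
  (∀ e ∈ L, e.1 < 32 ∧ e.2 < 32 ∧ e.1 ≠ e.2) ∧ (L.map fun e => s(e.1, e.2)).Nodup

instance : DecidablePred IsEdgeList := fun _ => instDecidableAnd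

variable {L M : List (ℕ × ℕ)} {e : ℕ × ℕ}

lemma graphOf_adj {a b : ℕ} : (graphOf L).Adj a b ↔ a ≠ b ∧ ((a, b) ∈ L ∨ (b, a) ∈ L) := by
  induction L with
  | nil => simp [graphOf]
  | cons e L ih =>
    obtain ⟨u, w⟩ := e
    rw [graphOf, sup_adj, edge_adj, ih]
    simp only [List.mem_cons, Prod.mk.injEq]
    tauto

lemma IsEdgeList.sublist (h : IsEdgeList M) (hLM : L.Sublist M) : IsEdgeList L :=
  ⟨fun e he => h.1 e (hLM.subset he), h.2.sublist (hLM.map _)⟩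

lemma IsEdgeList.not_adj (h : IsEdgeList (e :: L)) : ¬ (graphOf L).Adj e.1 e.2 := by
  rw [graphOf_adj]
  rintro ⟨-, hmem⟩
  refine (List.nodup_cons.1 h.2).1 (List.mem_map.2 ?_)
  exact hmem.elim (fun hmem => ⟨e, hmem, rfl⟩) fun hmem => ⟨e.swap, hmem, Sym2.eq_swap⟩

lemma IsEdgeList.edgeSet_graphOf_cons (h : IsEdgeList (e :: L)) :
    (graphOf (e :: L)).edgeSet = insert s(e.1, e.2) (graphOf L).edgeSet :=
  edgeSet_sup_edge (h.1 e List.mem_cons_self).2.2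

lemma finite_edgeSet_graphOf (L : List (ℕ × ℕ)) : (graphOf L).edgeSet.Finite := by
  induction L with
  | nil => simp [graphOf]
  | cons e L ih =>
    rw [graphOf, edgeSet_sup]
    exact ih.union ((Set.finite_singleton s(e.1, e.2)).subset edgeSet_edge_subset)

lemma IsEdgeList.ncard_edgeSet (h : IsEdgeList L) : (graphOf L).edgeSet.ncard = L.length := by
  induction L with
  | nil => simp [graphOf]
  | cons e L ih =>
    have hnew : s(e.1, e.2) ∉ (graphOf L).edgeSet := h.not_adj
    rw [h.edgeSet_graphOf_cons, Set.ncard_insert_of_notMem hnew (finite_edgeSet_graphOf L),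
      ih (h.sublist (List.sublist_cons_self e L)), List.length_cons]

lemma IsEdgeList.isBitmap (h : IsEdgeList L) : IsBitmap (bitmapOf L) (graphOf L) := by
  induction L with
  | nil => exact isBitmap_zero
  | cons e L ih =>
    obtain ⟨hu, hw, huw⟩ := h.1 e List.mem_cons_self
    exact (ih (h.sublist (List.sublist_cons_self e L))).sup_edge hu hw huw

lemma IsEdgeList.ncard_cycleEdgeSets (h : IsEdgeList L) (n : ℕ) :
    (cycleEdgeSets (graphOf L) n).ncard = countCycles (n + 3) L := by
  induction L with
  | nil =>
    have hempty : cycleEdgeSets (graphOf []) n = ∅ := by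
      refine Set.eq_empty_of_forall_notMem ?_
      rintro _ ⟨f, ⟨-, hadj⟩, -⟩
      exact hadj 0
    rw [hempty, Set.ncard_empty, countCycles]
  | cons e L ih =>
    have hL := h.sublist (List.sublist_cons_self e L)
    rw [graphOf, hL.isBitmap.ncard_cycleEdgeSets_sup_edge (finite_edgeSet_graphOf L)
      (h.1 e List.mem_cons_self).2.2 h.not_adj, ih hL, countCycles]

lemma countCycles_le_append (k : ℕ) (M L : List (ℕ × ℕ)) :
    countCycles k L ≤ countCycles k (M ++ L) := by
  induction M with
  | nil => exact le_rfl
  | cons e M ih => exact ih.trans (Nat.le_add_right _ _)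

lemma eq_graphOf_filter {Γ : SimpleGraph ℕ} [DecidableRel Γ.Adj] (hL : graphOf L ≤ Γ)
    (hM : Γ ≤ graphOf (M ++ L)) :
    Γ = graphOf ((M.filter fun e => decide (Γ.Adj e.1 e.2)).reverse ++ L) := by
  refine le_antisymm (fun a b hab => ?_) fun a b hab => ?_
  · obtain ⟨hne, h⟩ := graphOf_adj.1 (hM hab)
    refine graphOf_adj.2 ⟨hne, ?_⟩
    simp only [List.mem_append, List.mem_reverse, List.mem_filter, decide_eq_true_eq] at h ⊢
    have hba := hab.symm
    tauto
  · obtain ⟨hne, h⟩ := graphOf_adj.1 hab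
    simp only [List.mem_append, List.mem_reverse, List.mem_filter, decide_eq_true_eq] at h
    rcases h with (⟨-, h⟩ | h) | (⟨-, h⟩ | h)
    exacts [h, hL (graphOf_adj.2 ⟨hne, .inl h⟩), h.symm, hL (graphOf_adj.2 ⟨hne, .inr h⟩)]

end EdgeLists

section Search

/-- `f n`, with `n` evaluated first: the kernel has to decide whether `n` is zero. -/
def force {β : Type*} (f : ℕ → β) : ℕ → β
  | 0 => f 0
  | n + 1 => f (n + 1)

lemma force_apply {β : Type*} (f : ℕ → β) (n : ℕ) : force f n = f n := by
  cases n <;> rfl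

/-- Does `leaf` hold after adding any at most `r` elements of a list to a state? The addition of
an element is performed by `step`, which is told how many elements may still follow, and which
returns `none` if no completion needs to be examined. -/
def searchAll {σ α : Type*} (step : ℕ → σ → α → Option σ) (leaf : σ → Bool) :
    List α → ℕ → σ → Bool
  | [], _, s => leaf s
  | _ :: _, 0, s => leaf s
  | a :: l, r + 1, s =>
    (match step r s a with
      | none => true
      | some s' => searchAll step leaf l r s') && searchAll step leaf l (r + 1) s

lemma leaf_of_searchAll {σ α : Type*} {step : ℕ → σ → α → Option σ} {leaf : σ → Bool}
    {state : List α → σ} {final : List α → Prop}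
    (hstep : ∀ r L a T, T.length ≤ r → final (T ++ a :: L) →
      step r (state L) a = some (state (a :: L)))
    {l T : List α} {r : ℕ} {L : List α} (hsearch : searchAll step leaf l r (state L) = true)
    (hT : T.Sublist l) (hlen : T.length ≤ r) (hfinal : final (T.reverse ++ L)) :
    leaf (state (T.reverse ++ L)) = true := by
  induction l generalizing T r L with
  | nil =>
    obtain rfl := List.sublist_nil.1 hT
    rwa [searchAll] at hsearch
  | cons a l ih =>
    cases r with
    | zero =>
      obtain rfl := List.length_eq_zero_iff.1 (Nat.le_zero.1 hlen)
      rwa [searchAll] at hsearch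
    | succ r =>
      rw [searchAll, Bool.and_eq_true] at hsearch
      cases hT with
      | cons _ hT => exact ih hsearch.2 hT hlen hfinal
      | cons_cons _ hT =>
        rw [List.reverse_cons, List.append_assoc, List.singleton_append] at hfinal ⊢
        have hlen' := Nat.le_of_succ_le_succ hlen
        rw [hstep r L a _ (by simpa using hlen') hfinal] at hsearch
        exact ih hsearch.1 hT hlen' hfinal

/-- A graph met by the search, with what is needed to prune: its edges, its adjacency bitmap and
its numbers of 4-cycles and of `k`-cycles, where `k` is a parameter of the search. -/
structure SearchState where
  edges : List (ℕ × ℕ)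
  bitmap : ℕ
  fourCycles : ℕ
  longCycles : ℕ

/-- The search state of the graph with edge list `L`. -/
def stateOf (k : ℕ) (L : List (ℕ × ℕ)) : SearchState :=
  ⟨L, bitmapOf L, countCycles 4 L, countCycles k L⟩

/-- Can `c` cycles become exactly four by adding at most `r` edges? Edges never destroy cycles. -/
def admissible (r c : ℕ) : Bool :=
  Nat.ble c 4 && (Nat.ble 1 r || Nat.beq c 4)

/-- Adds the edge `e` to a state, unless this leads to a wrong number of 4-cycles or of
`k`-cycles whatever the `r` further edges are. -/
def pruneStep (k r : ℕ) (s : SearchState) (e : ℕ × ℕ) : Option SearchState :=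
  force (fun four =>
    if admissible r four then
      force (fun long =>
        if admissible r long then
          force (fun A => some ⟨e :: s.edges, A, four, long⟩) (addEdge s.bitmap e)
        else none) (s.longCycles + newCycles k s.bitmap e)
    else none) (s.fourCycles + newCycles 4 s.bitmap e)

lemma admissible_countCycles {k r : ℕ} {T L : List (ℕ × ℕ)} (hT : T.length ≤ r)
    (h : countCycles k (T ++ L) = 4) : admissible r (countCycles k L) = true := by
  rw [admissible, Bool.and_eq_true, Bool.or_eq_true, Nat.ble_eq, Nat.ble_eq, Nat.beq_eq]
  refine ⟨h ▸ countCycles_le_append k T L, ?_⟩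
  rcases T with _ | ⟨e, T⟩
  exacts [.inr h, .inl ((Nat.succ_pos _).trans_le hT)]

lemma pruneStep_stateOf {k r : ℕ} {T L : List (ℕ × ℕ)} {e : ℕ × ℕ} (hT : T.length ≤ r)
    (hfour : countCycles 4 (T ++ e :: L) = 4) (hlong : countCycles k (T ++ e :: L) = 4) :
    pruneStep k r (stateOf k L) e = some (stateOf k (e :: L)) := by
  have hfour' := admissible_countCycles hT hfour
  have hlong' := admissible_countCycles hT hlong
  simp only [countCycles] at hfour' hlong'
  simp only [pruneStep, stateOf, force_apply, hfour', hlong', if_true, countCycles, bitmapOf]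

end Search

section Classification

/-- The edges of a theta graph: the cycle `0, 1, …, 2 * m - 1` and the path `0, 2 * m, 2 * t`. -/
def thetaEdges (m t : ℕ) : List (ℕ × ℕ) :=
  (2 * m, 2 * t) :: (2 * m, 0) :: (0, 2 * m - 1) ::
    ((List.range (2 * m - 1)).map fun i => (i + 1, i)).reverse

/-- The edges that a graph normalized by `IsNormalized m t` may have besides `thetaEdges m t`:
edges `(2 * m, 2 * s)` with `t < s`, and chords `(2 * i, 2 * j + 1)` of the cycle. -/
def candidates (m t : ℕ) : List (ℕ × ℕ) :=
  ((List.range m).filterMap fun s => if t < s then some (2 * m, 2 * s) else none) ++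
    (List.range m).flatMap fun i => (List.range m).filterMap fun j =>
      if j = i ∨ j + 1 = i ∨ i = 0 ∧ j = m - 1 then none else some (2 * i, 2 * j + 1)

/-- The lists of further edges which together with `thetaEdges m t` give four cycles of each even
length from `4` to `2 * m`, as found by the search. -/
def survivors : ℕ → ℕ → List (List (ℕ × ℕ))
  | 4, 1 =>
    [[(4, 7), (0, 5)], [(6, 3), (2, 5)], [(6, 3), (4, 7)]]
  | 6, 1 =>
    [[(6, 11), (0, 9), (0, 7)], [(6, 11), (6, 9), (0, 7)], [(8, 3), (2, 7), (2, 5)],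
      [(8, 5), (8, 3), (2, 7)], [(10, 5), (4, 9), (4, 7)], [(8, 3), (6, 3), (4, 9)],
      [(8, 3), (6, 9), (4, 9)], [(10, 7), (10, 5), (4, 9)], [(10, 5), (8, 5), (6, 11)],
      [(10, 5), (8, 11), (6, 11)]]
  | _, _ => []

/-- Is the state no solution, or one of the `survivors`? -/
def isExplained (m t : ℕ) (s : SearchState) : Bool :=
  !((List.range (m - 1)).all fun i => Nat.beq (countCycles (2 * i + 4) s.edges) 4) ||
    (survivors m t).any fun S => S ++ thetaEdges m t == s.edges

set_option maxRecDepth 100000 in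
lemma searchAll_isExplained : ∀ m < 9, ∀ t < 5, 2 ≤ m → 1 ≤ t → 2 * t ≤ m →
    searchAll (pruneStep (min 6 (2 * m))) (isExplained m t) (candidates m t) 3
      (stateOf (min 6 (2 * m)) (thetaEdges m t)) = true := by
  decide +kernel

set_option maxRecDepth 100000 in
lemma isEdgeList_candidates : ∀ m < 9, ∀ t < 5, 2 ≤ m → 1 ≤ t → 2 * t ≤ m →
    IsEdgeList ((candidates m t).reverse ++ thetaEdges m t) := by
  decide +kernel

/-- The shape to which the classification is reduced: `Γ` contains the theta graph `thetaEdges m t`,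
it lives on `{0, …, 2 * m}`, the parities are those of a bipartite graph in which `2 * m` belongs
to the odd class, and `2 * t` is the least neighbor of `2 * m` apart from `0`. -/
structure IsNormalized (m t : ℕ) (Γ : SimpleGraph ℕ) : Prop where
  le_two_mul : ∀ {a b}, Γ.Adj a b → b ≤ 2 * m
  adj_add_one : ∀ i < 2 * m, Γ.Adj i ((i + 1) % (2 * m))
  adj_zero : Γ.Adj (2 * m) 0
  adj_two_mul : Γ.Adj (2 * m) (2 * t)
  spoke : ∀ {b}, Γ.Adj (2 * m) b → b % 2 = 0 ∧ (b = 0 ∨ 2 * t ≤ b)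
  chord : ∀ {a b}, a < 2 * m → b < 2 * m → Γ.Adj a b → a % 2 ≠ b % 2
  ncard_edgeSet_le : Γ.edgeSet.ncard ≤ 2 * m + 5
  cycleCount_eq : ∀ k, 4 ≤ k → k ≤ 2 * m → Even k → cycleCount Γ k = 4

variable {m t : ℕ} {Γ : SimpleGraph ℕ}

lemma length_thetaEdges (hm : 1 ≤ m) : (thetaEdges m t).length = 2 * m + 2 := by
  simp only [thetaEdges, List.length_cons, List.length_reverse, List.length_map, List.length_range]
  omega

lemma mem_thetaEdges {e : ℕ × ℕ} : e ∈ thetaEdges m t ↔ e = (2 * m, 2 * t) ∨ e = (2 * m, 0) ∨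
    e = (0, 2 * m - 1) ∨ ∃ i < 2 * m - 1, (i + 1, i) = e := by
  simp only [thetaEdges, List.mem_cons, List.mem_reverse, List.mem_map, List.mem_range]

lemma spoke_mem_candidates {s : ℕ} (hts : t < s) (hsm : s < m) :
    (2 * m, 2 * s) ∈ candidates m t :=
  List.mem_append_left _ (List.mem_filterMap.2 ⟨s, List.mem_range.2 hsm, if_pos hts⟩)

lemma chord_mem_candidates {i j : ℕ} (hi : i < m) (hj : j < m)
    (hij : ¬ (j = i ∨ j + 1 = i ∨ i = 0 ∧ j = m - 1)) :
    (2 * i, 2 * j + 1) ∈ candidates m t :=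
  List.mem_append_right _ (List.mem_flatMap.2 ⟨i, List.mem_range.2 hi,
    List.mem_filterMap.2 ⟨j, List.mem_range.2 hj, if_neg hij⟩⟩)

lemma IsNormalized.graphOf_thetaEdges_le (h : IsNormalized m t Γ) :
    graphOf (thetaEdges m t) ≤ Γ := by
  suffices hmem : ∀ e ∈ thetaEdges m t, e.1 ≠ e.2 → Γ.Adj e.1 e.2 by
    intro a b hab
    obtain ⟨hne, hab | hba⟩ := graphOf_adj.1 hab
    exacts [hmem _ hab hne, (hmem _ hba hne.symm).symm]
  intro e he hne
  obtain rfl | rfl | rfl | ⟨i, hi, rfl⟩ := mem_thetaEdges.1 he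
  · exact h.adj_two_mul
  · exact h.adj_zero
  · have hlast := h.adj_add_one (2 * m - 1) (by omega)
    rw [Nat.sub_add_cancel (by omega), Nat.mod_self] at hlast
    exact hlast.symm
  · have hnext := h.adj_add_one i (by omega)
    rw [Nat.mod_eq_of_lt (by omega)] at hnext
    exact hnext.symm

lemma IsNormalized.spoke_mem {b : ℕ} (h : IsNormalized m t Γ) (hb : Γ.Adj (2 * m) b) :
    (2 * m, b) ∈ candidates m t ++ thetaEdges m t := by
  have hne := hb.ne
  have hle := h.le_two_mul hb
  obtain ⟨heven, hzero | htb⟩ := h.spoke hb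
  · exact List.mem_append_right _ (mem_thetaEdges.2 (.inr (.inl (by rw [hzero]))))
  obtain ⟨s, rfl⟩ := Nat.dvd_of_mod_eq_zero heven
  rcases eq_or_lt_of_le htb with hts | hts
  · exact List.mem_append_right _ (mem_thetaEdges.2 (.inl (by rw [hts])))
  · exact List.mem_append_left _ (spoke_mem_candidates (by omega) (by omega))

lemma chord_mem {a b : ℕ} (ha : a < 2 * m) (hb : b < 2 * m) (heven : a % 2 = 0)
    (hodd : b % 2 = 1) : (a, b) ∈ candidates m t ++ thetaEdges m t ∨
      (b, a) ∈ candidates m t ++ thetaEdges m t := by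
  obtain ⟨i, rfl⟩ := Nat.dvd_of_mod_eq_zero heven
  obtain ⟨j, rfl⟩ := Nat.odd_iff.2 hodd
  simp only [List.mem_append, mem_thetaEdges]
  by_cases hij : j = i ∨ j + 1 = i ∨ i = 0 ∧ j = m - 1
  · rcases hij with rfl | rfl | ⟨rfl, rfl⟩
    · exact .inr (.inr (.inr (.inr (.inr ⟨2 * j, by omega, rfl⟩))))
    · exact .inl (.inr (.inr (.inr (.inr ⟨2 * j + 1, by omega, rfl⟩))))
    · exact .inl (.inr (.inr (.inr (.inl (Prod.ext rfl (by dsimp only; omega))))))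
  · exact .inl (.inl (chord_mem_candidates (by omega) (by omega) hij))

lemma IsNormalized.le_graphOf (h : IsNormalized m t Γ) :
    Γ ≤ graphOf (candidates m t ++ thetaEdges m t) := by
  intro a b hab
  refine graphOf_adj.2 ⟨hab.ne, ?_⟩
  have ha := h.le_two_mul hab.symm
  have hb := h.le_two_mul hab
  rcases eq_or_lt_of_le ha with rfl | ha
  · exact .inl (h.spoke_mem hab)
  rcases eq_or_lt_of_le hb with rfl | hb
  · exact .inr (h.spoke_mem hab.symm)
  have hparity := h.chord ha hb hab
  rcases Nat.mod_two_eq_zero_or_one a with hmod | hmod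
  · exact chord_mem ha hb hmod (by omega)
  · exact (chord_mem hb ha (by omega) hmod).symm

lemma IsNormalized.countCycles_eq {L : List (ℕ × ℕ)} (h : IsNormalized m t (graphOf L))
    (hL : IsEdgeList L) {k : ℕ} (hk : 4 ≤ k) (hkm : k ≤ 2 * m) (heven : Even k) :
    countCycles k L = 4 := by
  obtain ⟨n, rfl⟩ := Nat.exists_eq_add_of_le' ((Nat.le_succ 3).trans hk)
  rw [← hL.ncard_cycleEdgeSets, ← cycleCount_eq_ncard_cycleEdgeSets, h.cycleCount_eq _ hk hkm heven]

lemma IsNormalized.exists_edgeList (h : IsNormalized m t Γ) (hm : 1 ≤ m)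
    (hcandidates : IsEdgeList ((candidates m t).reverse ++ thetaEdges m t)) :
    ∃ T : List (ℕ × ℕ), T.Sublist (candidates m t) ∧ T.length ≤ 3 ∧
      IsEdgeList (T.reverse ++ thetaEdges m t) ∧ Γ = graphOf (T.reverse ++ thetaEdges m t) := by
  classical
  set T := (candidates m t).filter fun e => decide (Γ.Adj e.1 e.2)
  have hsublist : T.Sublist (candidates m t) := List.filter_sublist
  have hlist : IsEdgeList (T.reverse ++ thetaEdges m t) :=
    hcandidates.sublist (hsublist.reverse.append (.refl _))
  have heq := eq_graphOf_filter h.graphOf_thetaEdges_le h.le_graphOf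
  refine ⟨T, hsublist, ?_, hlist, heq⟩
  have hcard := h.ncard_edgeSet_le
  rw [heq, hlist.ncard_edgeSet, List.length_append, List.length_reverse, length_thetaEdges hm]
    at hcard
  omega

lemma IsNormalized.exists_survivor (h : IsNormalized m t Γ) (hm : 2 ≤ m) (hm' : m ≤ 8)
    (ht : 1 ≤ t) (htm : 2 * t ≤ m) : ∃ S ∈ survivors m t, Γ = graphOf (S ++ thetaEdges m t) := by
  obtain ⟨T, hsublist, hlength, hlist, rfl⟩ :=
    h.exists_edgeList (by omega) (isEdgeList_candidates m (by omega) t (by omega) hm ht htm)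
  have hfour : ∀ k, 4 ≤ k → k ≤ 2 * m → Even k →
      countCycles k (T.reverse ++ thetaEdges m t) = 4 := fun k => h.countCycles_eq hlist
  have heven : Even (min 6 (2 * m)) := by
    rcases min_choice 6 (2 * m) with h | h <;> simp [h, Nat.even_iff]
  have hexplained := leaf_of_searchAll (state := stateOf (min 6 (2 * m)))
    (final := fun L => ∀ k, 4 ≤ k → k ≤ 2 * m → Even k → countCycles k L = 4)
    (fun r L a T hT hfinal => pruneStep_stateOf hT (hfinal 4 le_rfl (by omega) (by decide))
      (hfinal _ (by omega) (by omega) heven))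
    (searchAll_isExplained m (by omega) t (by omega) hm ht htm) hsublist hlength hfour
  have hcounts : ((List.range (m - 1)).all fun i =>
      Nat.beq (countCycles (2 * i + 4) (T.reverse ++ thetaEdges m t)) 4) = true := by
    simp only [List.all_eq_true, List.mem_range, Nat.beq_eq]
    exact fun i hi => hfour _ (by omega) (by omega) (by grind)
  simp only [isExplained, stateOf, hcounts, Bool.not_true, Bool.false_or, List.any_eq_true,
    beq_iff_eq] at hexplained
  obtain ⟨S, hS, heq⟩ := hexplained
  exact ⟨S, hS, by rw [heq]⟩

end Classification

section CycleSpace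

variable {V : Type*} {G T : SimpleGraph V} {E F : Set (Sym2 V)} {n : ℕ}

/-- The cycle space of `G`: the sets of edges which meet every vertex an even number of times. -/
def cycleSpace (G : SimpleGraph V) : Set (Set (Sym2 V)) :=
  {E | E ⊆ G.edgeSet ∧ ∀ v, Even {e ∈ E | v ∈ e}.ncard}

lemma cycleSpace_finite (hG : G.edgeSet.Finite) : (cycleSpace G).Finite :=
  hG.finite_subsets.subset fun _ hE => hE.1

lemma cycleEdgeSets_subset_cycleSpace : cycleEdgeSets G n ⊆ cycleSpace G := by
  intro E hE
  refine ⟨subset_edgeSet_of_mem_cycleEdgeSets hE, fun v => ?_⟩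
  obtain ⟨f, ⟨hf, -⟩, rfl⟩ := hE
  by_cases hv : ∃ i, f i = v
  · obtain ⟨i, rfl⟩ := hv
    rw [cycleEdges_inter_incident hf, Set.ncard_pair]
    · exact even_two
    · rw [Ne, Sym2.congr_right]
      exact fun h => add_one_ne_sub_one i (hf h).symm
  · have hempty : {e ∈ cycleEdges f | v ∈ e} = ∅ := by
      refine Set.eq_empty_of_forall_notMem ?_
      rintro _ ⟨⟨i, rfl⟩, hi⟩
      rcases Sym2.mem_iff.1 hi with rfl | rfl
      exacts [hv ⟨_, rfl⟩, hv ⟨_, rfl⟩]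
    rw [hempty, Set.ncard_empty]
    exact Even.zero

lemma ncard_cycleEdges {f : Fin (n + 3) → V} (hf : f.Injective) : (cycleEdges f).ncard = n + 3 := by
  have hinj : Function.Injective fun i => s(f i, f (i + 1)) := by
    intro i j h
    rcases Sym2.eq_iff.1 h with ⟨hij, -⟩ | ⟨hij, hji⟩
    · exact hf hij
    · refine absurd ?_ (add_one_ne_sub_one i)
      rw [eq_sub_iff_add_eq, hf hji, hf hij]
  rw [cycleEdges, ← Set.image_univ, Set.ncard_image_of_injective _ hinj, Set.ncard_univ,
    Nat.card_fin]

lemma even_ncard_symmDiff {α : Type*} {A B : Set α} (hA : A.Finite) (hB : B.Finite)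
    (hA' : Even A.ncard) (hB' : Even B.ncard) : Even (symmDiff A B).ncard := by
  have hunion : (symmDiff A B).ncard = (A \ B).ncard + (B \ A).ncard :=
    Set.ncard_union_eq disjoint_sdiff_sdiff hA.sdiff hB.sdiff
  have hAB := Set.ncard_inter_add_ncard_sdiff_eq_ncard A B hA
  have hBA := Set.ncard_inter_add_ncard_sdiff_eq_ncard B A hB
  rw [Set.inter_comm] at hBA
  rw [hunion]
  grind

lemma symmDiff_mem_cycleSpace (hG : G.edgeSet.Finite) (hE : E ∈ cycleSpace G)
    (hF : F ∈ cycleSpace G) : symmDiff E F ∈ cycleSpace G := by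
  refine ⟨symmDiff_le_sup.trans (sup_le hE.1 hF.1), fun v => ?_⟩
  have hincident : {e ∈ symmDiff E F | v ∈ e} = symmDiff {e ∈ E | v ∈ e} {e ∈ F | v ∈ e} := by
    ext e
    simp only [Set.mem_symmDiff, Set.mem_ofPred_eq]
    tauto
  rw [hincident]
  exact even_ncard_symmDiff ((hG.subset hE.1).subset (Set.sep_subset _ _))
    ((hG.subset hF.1).subset (Set.sep_subset _ _)) (hE.2 v) (hF.2 v)

lemma exists_neighborSet_eq_singleton [Finite T.edgeSet] (hT : T.IsAcyclic) (hne : T ≠ ⊥) :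
    ∃ u w, T.neighborSet u = {w} := by
  obtain ⟨a, b, hab⟩ := ne_bot_iff_exists_adj.1 hne
  have : Nonempty V := ⟨a⟩
  obtain ⟨u, v, p, hp, hmax⟩ :=
    Walk.exists_isPath_forall_isPath_length_le_length T
  have hnil : ¬ p.Nil := by
    rw [← Walk.length_eq_zero_iff]
    have hlength := hmax _ _ (Path.singleton hab).1 (Path.singleton hab).2
    simp only [Path.singleton, Walk.length_cons] at hlength
    omega
  refine ⟨u, p.snd, Set.ext fun w => ⟨fun hw => ?_, ?_⟩⟩
  · refine hT.eq_snd_of_adj_start hp hw ?_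
    by_contra hsupport
    have hlength := hmax _ _ (p.cons hw.symm) (hp.cons hsupport)
    rw [Walk.length_cons] at hlength
    omega
  · rintro rfl
    exact p.adj_snd hnil

lemma eq_empty_of_mem_cycleSpace (hT : T.IsAcyclic) (hfin : T.edgeSet.Finite)
    (hE : E ∈ cycleSpace T) : E = ∅ := by
  have hloopless : ∀ e ∈ E, ¬ e.IsDiag := fun e he => T.not_isDiag_of_mem_edgeSet (hE.1 he)
  have hedgeSet : (fromEdgeSet E).edgeSet = E := by
    rw [edgeSet_fromEdgeSet]
    exact sdiff_eq_left.2 (Set.disjoint_left.2 hloopless)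
  have hle : fromEdgeSet E ≤ T := by
    rw [← edgeSet_subset_edgeSet, hedgeSet]
    exact hE.1
  have : Finite (fromEdgeSet E).edgeSet := by
    rw [hedgeSet]
    exact (hfin.subset hE.1).to_subtype
  by_contra hne
  obtain ⟨u, w, huw⟩ := exists_neighborSet_eq_singleton (hT.anti hle) fun hbot => hne (by
    rw [← hedgeSet, hbot, edgeSet_bot])
  have hincident : {e ∈ E | u ∈ e} = {s(u, w)} := by
    have hmem : ∀ b, s(u, b) ∈ E ↔ b = w := fun b => by
      rw [← hedgeSet, mem_edgeSet, ← mem_neighborSet, huw, Set.mem_singleton_iff]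
    ext e
    simp only [Set.mem_ofPred_eq, Set.mem_singleton_iff]
    constructor
    · rintro ⟨he, b, rfl⟩
      rw [(hmem b).1 he]
    · rintro rfl
      exact ⟨(hmem w).2 rfl, Sym2.mem_mk_left u w⟩
  have heven := hE.2 u
  rw [hincident, Set.ncard_singleton] at heven
  exact absurd heven (by decide)

lemma injOn_sdiff_cycleSpace (hG : G.edgeSet.Finite) (hT : T.IsAcyclic) (hTG : T ≤ G) :
    Set.InjOn (· \ T.edgeSet) (cycleSpace G) := by
  intro E hE F hF (h : E \ T.edgeSet = F \ T.edgeSet)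
  have hsubset : symmDiff E F ⊆ T.edgeSet := by
    intro e he
    by_contra hT'
    have := Set.ext_iff.1 h e
    simp only [Set.mem_sdiff, Set.mem_symmDiff] at this he
    tauto
  exact symmDiff_eq_bot.1 (eq_empty_of_mem_cycleSpace hT (hG.subset (edgeSet_mono hTG))
    ⟨hsubset, (symmDiff_mem_cycleSpace hG hE hF).2⟩)

lemma ncard_cycleSpace_le [Finite V] (hG : G.Connected) :
    (cycleSpace G).ncard ≤ 2 ^ (G.edgeSet.ncard + 1 - Nat.card V) := by
  classical
  have := Fintype.ofFinite V
  obtain ⟨T, hTG, hT⟩ := hG.exists_isTree_le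
  have hfin : G.edgeSet.Finite := Set.toFinite _
  have hcotree : (G.edgeSet \ T.edgeSet).ncard = G.edgeSet.ncard + 1 - Nat.card V := by
    have hcard := hT.card_edgeFinset
    rw [Set.ncard_sdiff (edgeSet_mono hTG), Nat.card_eq_fintype_card, ← hcard,
      ← coe_edgeFinset T, Set.ncard_coe_finset]
    omega
  rw [← hcotree, ← Set.ncard_powerset _ hfin.sdiff]
  refine Set.ncard_le_ncard_of_injOn _ (fun E hE => ?_)
    (injOn_sdiff_cycleSpace hfin hT.isAcyclic hTG) hfin.sdiff.finite_subsets
  exact Set.sdiff_subset_sdiff_left hE.1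

lemma sum_ncard_cycleEdgeSets_lt (hG : G.edgeSet.Finite) (s : Finset ℕ) :
    ∑ n ∈ s, (cycleEdgeSets G n).ncard < (cycleSpace G).ncard := by
  have hdisjoint : (s : Set ℕ).PairwiseDisjoint fun n => cycleEdgeSets G n := by
    intro n _ k _ hnk
    refine Set.disjoint_left.2 ?_
    rintro _ ⟨f, ⟨hf, -⟩, rfl⟩ ⟨g, ⟨hg, -⟩, hfg⟩
    have hlength := ncard_cycleEdges hg
    rw [hfg, ncard_cycleEdges hf] at hlength
    exact hnk (by omega)
  have hempty : ∅ ∉ ⋃ n ∈ s, cycleEdgeSets G n := by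
    simp only [Set.mem_iUnion, not_exists]
    rintro n - ⟨f, -, hf⟩
    exact (Set.range_nonempty _).ne_empty hf
  have hunion : (⋃ n ∈ s, cycleEdgeSets G n).ncard = ∑ n ∈ s, (cycleEdgeSets G n).ncard := by
    rw [← finsum_mem_coe_finset]
    exact s.finite_toSet.ncard_biUnion (fun n _ => cycleEdgeSets_finite hG) hdisjoint
  have hfinite : (⋃ n ∈ s, cycleEdgeSets G n).Finite :=
    s.finite_toSet.biUnion fun n _ => cycleEdgeSets_finite hG
  rw [← hunion, Nat.lt_iff_add_one_le, ← Set.ncard_insert_of_notMem hempty hfinite]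
  refine Set.ncard_le_ncard (Set.insert_subset ?_ (Set.iUnion₂_subset fun n _ =>
    cycleEdgeSets_subset_cycleSpace)) (cycleSpace_finite hG)
  exact ⟨Set.empty_subset _, fun v => by simp⟩

end CycleSpace

section Normalization

variable {V : Type*} {G : SimpleGraph V} {N m : ℕ} {F : ℕ → V} {x : V}

/-- `F 0, F 1, …` runs around a cycle of length `N` of `G` through all vertices except `x`. -/
structure IsRim (G : SimpleGraph V) (N : ℕ) (F : ℕ → V) (x : V) : Prop where
  pos : 0 < N
  adj : ∀ k, G.Adj (F k) (F (k + 1))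
  eq_iff : ∀ {a b}, F a = F b ↔ a ≡ b [MOD N]
  ne : ∀ k, F k ≠ x
  exists_eq : ∀ {y}, y ≠ x → ∃ k, F k = y

lemma exists_isRim_of_nonempty [Fintype V] {n : ℕ} (hcard : Fintype.card V = n + 4)
    (hG : (cycleEdgeSets G n).Nonempty) : ∃ F x, IsRim G (n + 3) F x := by
  classical
  obtain ⟨_, f, ⟨hf, hadj⟩, -⟩ := hG
  have himage : (Finset.univ.image f)ᶜ.card = 1 := by
    rw [Finset.card_compl, Finset.card_image_of_injective _ hf, hcard, Finset.card_fin]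
    omega
  obtain ⟨x, hx⟩ := Finset.card_eq_one.1 himage
  have hrange : ∀ y, (∀ k, f k ≠ y) ↔ y = x := fun y => by
    rw [← Finset.mem_singleton, ← hx]
    simp
  refine ⟨fun k => f (Fin.ofNat (n + 3) k), x, by omega, fun k => ?_, fun {a b} => ?_,
    fun k => (hrange x).2 rfl _, fun {y} hy => ?_⟩
  · have hsucc : Fin.ofNat (n + 3) (k + 1) = Fin.ofNat (n + 3) k + 1 := by
      simp [Fin.ext_iff, Fin.val_add]
    rw [hsucc]
    exact hadj _
  · rw [hf.eq_iff, Fin.ext_iff]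
    rfl
  · rw [Ne, ← hrange, not_forall_not] at hy
    exact hy.imp' Fin.val fun k hk => by rwa [Fin.ofNat_val_eq_self]

namespace IsRim

lemma shift (h : IsRim G N F x) (i : ℕ) : IsRim G N (fun k => F (i + k)) x where
  pos := h.pos
  adj k := h.adj (i + k)
  eq_iff {a b} := h.eq_iff.trans (Nat.ModEq.rfl.add_iff_left)
  ne k := h.ne (i + k)
  exists_eq {y} hy := by
    obtain ⟨k, rfl⟩ := h.exists_eq hy
    obtain ⟨M, rfl⟩ := Nat.exists_eq_succ_of_ne_zero h.pos.ne'
    refine ⟨k + i * M, h.eq_iff.2 ?_⟩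
    rw [show i + (k + i * M) = k + i * M.succ by rw [Nat.succ_eq_add_one]; ring]
    exact Nat.add_mul_mod_self_right k i M.succ

lemma exists_lt (h : IsRim G N F x) {y : V} (hy : y ≠ x) : ∃ k < N, F k = y := by
  obtain ⟨k, rfl⟩ := h.exists_eq hy
  exact ⟨k % N, Nat.mod_lt k h.pos, h.eq_iff.2 (Nat.mod_modEq k N)⟩

lemma connected (h : IsRim G N F x) {y : V} (hxy : G.Adj x y) : G.Connected := by
  have hreach : ∀ k, G.Reachable (F 0) (F k) := fun k => by
    induction k with
    | zero => rfl
    | succ k ih => exact ih.trans (h.adj k).reachable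
  obtain ⟨k, rfl⟩ := h.exists_eq hxy.ne'
  refine (connected_iff_exists_forall_reachable G).2 ⟨F 0, fun z => ?_⟩
  rcases eq_or_ne z x with rfl | hz
  · exact (hreach k).trans hxy.symm.reachable
  · obtain ⟨i, rfl⟩ := h.exists_eq hz
    exact hreach i

lemma coloring_eq_iff (h : IsRim G N F x) (c : G.Coloring Bool) {a b : ℕ} :
    c (F a) = c (F b) ↔ a % 2 = b % 2 := by
  have hcolor : ∀ k, c (F k) = (c (F 0)).xor (decide (k % 2 = 1)) := fun k => by
    induction k with
    | zero => simp
    | succ k ih =>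
      have hvalid := c.valid (h.adj k)
      rw [Bool.eq_not.2 hvalid.symm, ih]
      rcases Nat.mod_two_eq_zero_or_one k with hk | hk <;> simp [hk, Nat.add_mod]
  rw [hcolor a, hcolor b]
  rcases Nat.mod_two_eq_zero_or_one a with ha | ha <;>
    rcases Nat.mod_two_eq_zero_or_one b with hb | hb <;> simp [ha, hb]

lemma mod_two_eq_of_adj (h : IsRim G N F x) (c : G.Coloring Bool) {a b : ℕ}
    (ha : G.Adj x (F a)) (hb : G.Adj x (F b)) : a % 2 = b % 2 := by
  rw [← h.coloring_eq_iff c, Bool.eq_not.2 (c.valid ha).symm, Bool.eq_not.2 (c.valid hb).symm]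

lemma exists_embedding (h : IsRim G N F x) :
    ∃ ψ : V ↪ ℕ, (∀ k, ψ (F k) = k % N) ∧ ψ x = N := by
  classical
  have hlabel : ∀ y, ∃ k, (y = x ∧ k = N) ∨ (k < N ∧ F k = y) := fun y => by
    rcases eq_or_ne y x with rfl | hy
    · exact ⟨N, .inl ⟨rfl, rfl⟩⟩
    · exact (h.exists_lt hy).imp fun k hk => .inr hk
  choose ψ hψ using hlabel
  refine ⟨⟨ψ, fun y z hyz => ?_⟩, fun k => ?_, ?_⟩
  · rcases hψ y with ⟨hy, hy'⟩ | ⟨hy, hy'⟩ <;> rcases hψ z with ⟨hz, hz'⟩ | ⟨hz, hz'⟩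
    · rw [hy, hz]
    · omega
    · omega
    · rw [← hy', ← hz', hyz]
  · obtain ⟨hlt, heq⟩ := (hψ (F k)).resolve_left fun hk => h.ne k hk.1
    rw [← h.eq_iff.1 heq]
    exact (Nat.mod_eq_of_lt hlt).symm
  · rcases hψ x with ⟨-, hx⟩ | ⟨-, hx⟩
    exacts [hx, absurd hx (h.ne _)]

lemma label_lt (h : IsRim G N F x) {ψ : V → ℕ} (hψ : ∀ k, ψ (F k) = k % N) {y : V}
    (hy : y ≠ x) : ψ y < N := by
  obtain ⟨k, rfl⟩ := h.exists_eq hy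
  exact hψ k ▸ Nat.mod_lt k h.pos

lemma apply_label (h : IsRim G N F x) {ψ : V → ℕ} (hψ : ∀ k, ψ (F k) = k % N) {y : V}
    (hy : y ≠ x) : F (ψ y) = y := by
  obtain ⟨k, rfl⟩ := h.exists_eq hy
  rw [hψ, h.eq_iff]
  exact Nat.mod_modEq k N

lemma exists_minimal_gap [Finite V] (h : IsRim G N F x)
    (hdeg : 2 ≤ (G.neighborSet x).ncard) :
    ∃ F τ, IsRim G N F x ∧ 0 < τ ∧ 2 * τ ≤ N ∧ G.Adj x (F 0) ∧ G.Adj x (F τ) ∧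
      ∀ s, 0 < s → s < τ → ¬ G.Adj x (F s) := by
  classical
  let gap (τ : ℕ) : Prop :=
    0 < τ ∧ τ < N ∧ ∃ F, IsRim G N F x ∧ G.Adj x (F 0) ∧ G.Adj x (F τ)
  have hgap : ∃ τ, gap τ := by
    obtain ⟨y, hy, z, hz, hyz⟩ := (Set.one_lt_ncard (Set.toFinite _)).1 hdeg
    obtain ⟨a, ha, rfl⟩ := h.exists_lt hy.ne'
    obtain ⟨b, hb, rfl⟩ := h.exists_lt hz.ne'
    wlog hab : a < b generalizing a b
    · exact this b hb hz a ha hy hyz.symm (by grind)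
    exact ⟨b - a, by omega, by omega, _, h.shift a, hy, by rwa [Nat.add_sub_cancel' hab.le]⟩
  obtain ⟨τ, ⟨hpos, hlt, F, hF, hzero, hτ⟩, hmin⟩ : ∃ τ, gap τ ∧ ∀ s < τ, ¬ gap s :=
    ⟨Nat.find hgap, Nat.find_spec hgap, fun _ => Nat.find_min hgap⟩
  have hback : gap (N - τ) := by
    refine ⟨by omega, by omega, _, hF.shift τ, hτ, ?_⟩
    rwa [Nat.add_sub_cancel' hlt.le, hF.eq_iff.2 (Nat.modEq_zero_iff_dvd.2 dvd_rfl)]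
  refine ⟨F, τ, hF, hpos, ?_, hzero, hτ, fun s hs hsτ hadj => ?_⟩
  · by_contra! hlong
    exact hmin _ (by omega) hback
  · exact hmin s hsτ ⟨hs, hsτ.trans hlt, F, hF, hzero, hadj⟩

lemma isNormalized_map [Finite V] {t : ℕ} (h : IsRim G (2 * m) F x) (c : G.Coloring Bool)
    {ψ : V ↪ ℕ} (hψ : ∀ k, ψ (F k) = k % (2 * m)) (hx : ψ x = 2 * m) (htm : t < m)
    (hzero : G.Adj x (F 0)) (ht : G.Adj x (F (2 * t)))
    (hmin : ∀ s, 0 < s → s < 2 * t → ¬ G.Adj x (F s)) (hedges : G.edgeSet.ncard ≤ 2 * m + 5)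
    (hcount : ∀ k, 4 ≤ k → k ≤ 2 * m → Even k → cycleCount G k = 4) :
    IsNormalized m t (G.map ψ) := by
  have hmap : ∀ {u v}, G.Adj u v → (G.map ψ).Adj (ψ u) (ψ v) := (map_adj_apply).2
  constructor
  case le_two_mul =>
    intro a b hab
    obtain ⟨u, v, -, rfl, rfl⟩ := (map_adj ..).1 hab
    rcases eq_or_ne v x with rfl | hv
    exacts [hx.le, (h.label_lt hψ hv).le]
  case adj_add_one =>
    intro i hi
    simpa only [hψ, Nat.mod_eq_of_lt hi] using hmap (h.adj i)
  case adj_zero => simpa only [hψ, hx, Nat.zero_mod] using hmap hzero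
  case adj_two_mul =>
    simpa only [hψ, hx, Nat.mod_eq_of_lt (Nat.mul_lt_mul_of_pos_left htm two_pos)] using hmap ht
  case spoke =>
    intro b hb
    obtain ⟨u, v, huv, hu, rfl⟩ := (map_adj ..).1 hb
    obtain rfl : u = x := ψ.injective (hu.trans hx.symm)
    rw [← h.apply_label hψ huv.ne'] at huv
    refine ⟨h.mod_two_eq_of_adj c huv hzero, (Nat.eq_zero_or_pos _).imp_right fun hpos => ?_⟩
    by_contra! hlt
    exact hmin _ hpos hlt huv
  case chord =>
    intro a b ha hb hab
    obtain ⟨u, v, huv, rfl, rfl⟩ := (map_adj ..).1 hab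
    have hu : u ≠ x := fun hu => ha.ne ((congrArg ψ hu).trans hx)
    have hv : v ≠ x := fun hv => hb.ne ((congrArg ψ hv).trans hx)
    rw [Ne, ← h.coloring_eq_iff c, h.apply_label hψ hu, h.apply_label hψ hv]
    exact c.valid huv
  case ncard_edgeSet_le =>
    rw [edgeSet_map]
    exact (Set.ncard_image_le (Set.toFinite _)).trans hedges
  case cycleCount_eq =>
    intro k hk hkm heven
    obtain ⟨n, rfl⟩ := Nat.exists_eq_add_of_le' ((Nat.le_succ 3).trans hk)
    rw [cycleCount_map, hcount _ hk hkm heven]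

end IsRim

lemma exists_isRim [Fintype V] {r : ℕ} (hr : r ≠ 0) (hG : IsOddlyRBipancyclic G r)
    (hcard : Fintype.card V = 2 * m + 1) (hm : 2 ≤ m) : ∃ F x, IsRim G (2 * m) F x := by
  obtain ⟨n, hn⟩ : ∃ n, n + 3 = 2 * m := ⟨2 * m - 3, by omega⟩
  have hcount := hG.2.2.2 (2 * m) (by omega) (by omega) (even_two_mul m)
  rw [← hn, cycleCount_eq_ncard_cycleEdgeSets] at hcount
  rw [← hn]
  exact exists_isRim_of_nonempty (by omega) (Set.nonempty_of_ncard_ne_zero (hcount ▸ hr))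

lemma le_eight [Fintype V] (hG : IsOddlyRBipancyclic G 4) (hcard : Fintype.card V = 2 * m + 1)
    (hm : 2 ≤ m) (hedges : G.edgeSet.ncard ≤ 2 * m + 5) : m ≤ 8 := by
  obtain ⟨F, x, hF⟩ := exists_isRim four_ne_zero hG hcard hm
  obtain ⟨y, hxy⟩ : (G.neighborSet x).Nonempty :=
    Set.nonempty_of_ncard_ne_zero (two_pos.trans_le (hG.2.2.1 x)).ne'
  have hlt : 4 * (m - 1) < (cycleSpace G).ncard := by
    refine lt_of_eq_of_lt ?_ (sum_ncard_cycleEdgeSets_lt (Set.toFinite _)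
      ((Finset.range (m - 1)).image (2 * · + 1)))
    rw [Finset.sum_image (by intro i _ j _ hij; simpa using hij), Finset.sum_congr rfl
      fun i hi => ?_, Finset.sum_const, Finset.card_range, smul_eq_mul, mul_comm]
    rw [← cycleCount_eq_ncard_cycleEdgeSets]
    rw [Finset.mem_range] at hi
    exact hG.2.2.2 _ (by omega) (by omega) (by grind)
  have hle : (cycleSpace G).ncard ≤ 2 ^ 5 := (ncard_cycleSpace_le (hF.connected hxy)).trans
    (Nat.pow_le_pow_right two_pos (by rw [Nat.card_eq_fintype_card, hcard]; omega))
  omega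

lemma exists_isNormalized [Fintype V] (hG : IsOddlyRBipancyclic G 4)
    (hcard : Fintype.card V = 2 * m + 1) (hm : 2 ≤ m) (hedges : G.edgeSet.ncard ≤ 2 * m + 5) :
    ∃ t, ∃ ψ : V ↪ ℕ, 1 ≤ t ∧ 2 * t ≤ m ∧ (∀ y, ψ y < 2 * m + 1) ∧ IsNormalized m t (G.map ψ) := by
  obtain ⟨F₀, x, hF₀⟩ := exists_isRim four_ne_zero hG hcard hm
  obtain ⟨⟨c⟩, -, hdeg, hcount⟩ := hG
  obtain ⟨F, τ, hF, hpos, hτ, hzero, hadj, hmin⟩ := hF₀.exists_minimal_gap (hdeg x)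
  let c' : G.Coloring Bool := G.recolorOfEquiv finTwoEquiv c
  have heven : τ % 2 = 0 := hF.mod_two_eq_of_adj c' hadj hzero
  obtain ⟨t, rfl⟩ := Nat.dvd_of_mod_eq_zero heven
  obtain ⟨ψ, hψ, hx⟩ := hF.exists_embedding
  refine ⟨t, ψ, by omega, by omega, fun y => ?_, hF.isNormalized_map c' hψ hx (by omega) hzero
    hadj hmin hedges fun k hk hkm => hcount k hk (by omega)⟩
  rcases eq_or_ne y x with rfl | hy
  · omega
  · exact (hF.label_lt hψ hy).trans (Nat.lt_succ_self _)

end Normalization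

section Solutions

variable {v : ℕ} {L : List (ℕ × ℕ)}

/-- The graph of an edge list, restricted to the vertices `0, …, v - 1`. -/
def finGraph (v : ℕ) (L : List (ℕ × ℕ)) : SimpleGraph (Fin v) :=
  (graphOf L).comap Fin.val

lemma finGraph_adj {a b : Fin v} : (finGraph v L).Adj a b ↔
    (a : ℕ) ≠ b ∧ (((a : ℕ), (b : ℕ)) ∈ L ∨ ((b : ℕ), (a : ℕ)) ∈ L) :=
  comap_adj.trans graphOf_adj

instance : DecidableRel (finGraph v L).Adj := fun _ _ => decidable_of_iff' _ finGraph_adj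

lemma map_finGraph (hlt : ∀ e ∈ L, e.1 < v ∧ e.2 < v) :
    (finGraph v L).map Fin.valEmbedding = graphOf L := by
  refine le_antisymm (map_comap_le Fin.valEmbedding _) fun a b hab => ?_
  obtain ⟨ha, hb⟩ : a < v ∧ b < v := by
    obtain ⟨-, h | h⟩ := graphOf_adj.1 hab
    exacts [hlt _ h, (hlt _ h).symm]
  exact (map_adj ..).2 ⟨⟨a, ha⟩, ⟨b, hb⟩, hab, rfl, rfl⟩

lemma ncard_edgeSet_finGraph (hL : IsEdgeList L) (hlt : ∀ e ∈ L, e.1 < v ∧ e.2 < v) :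
    (finGraph v L).edgeSet.ncard = L.length := by
  rw [← hL.ncard_edgeSet, ← map_finGraph hlt, edgeSet_map,
    Set.ncard_image_of_injective _ (Function.Embedding.injective _)]

lemma cycleCount_finGraph (hL : IsEdgeList L) (hlt : ∀ e ∈ L, e.1 < v ∧ e.2 < v) {k : ℕ}
    (hk : 3 ≤ k) : cycleCount (finGraph v L) k = countCycles k L := by
  obtain ⟨n, rfl⟩ := Nat.exists_eq_add_of_le' hk
  rw [← cycleCount_map _ Fin.valEmbedding, map_finGraph hlt, cycleCount_eq_ncard_cycleEdgeSets,
    hL.ncard_cycleEdgeSets]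

lemma isOddlyRBipancyclic_finGraph {r : ℕ} (hL : IsEdgeList L)
    (hlt : ∀ e ∈ L, e.1 < v ∧ e.2 < v) (c : Fin v → Fin 2)
    (hc : ∀ a b, (finGraph v L).Adj a b → c a ≠ c b) (hodd : Odd v)
    (hdeg : ∀ a, 2 ≤ (finGraph v L).degree a)
    (hcount : ∀ k < v, 4 ≤ k → Even k → countCycles k L = r) :
    IsOddlyRBipancyclic (finGraph v L) r := by
  refine ⟨⟨Coloring.mk c fun {a b} => hc a b⟩, by rwa [Fintype.card_fin], fun a => ?_,
    fun k hk hkv heven => ?_⟩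
  · rw [Set.ncard_eq_toFinset_card']
    exact hdeg a
  · rw [Fintype.card_fin] at hkv
    rw [cycleCount_finGraph hL hlt (by omega), hcount k (by omega) hk heven]

/-- Twice the second Zagreb index, an isomorphism invariant. -/
def zagrebIndex {V : Type*} [Fintype V] (G : SimpleGraph V) [DecidableRel G.Adj] : ℕ :=
  ∑ x, ∑ y ∈ G.neighborFinset x, G.degree x * G.degree y

lemma zagrebIndex_eq_of_iso {V W : Type*} [Fintype V] [Fintype W] {G : SimpleGraph V}
    {H : SimpleGraph W} [DecidableRel G.Adj] [DecidableRel H.Adj] (e : G ≃g H) :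
    zagrebIndex G = zagrebIndex H := by
  refine Fintype.sum_equiv e.toEquiv _ _ fun x => Finset.sum_equiv e.toEquiv (fun y => ?_)
    fun y _ => ?_
  · rw [mem_neighborFinset, mem_neighborFinset]
    exact e.map_adj_iff.symm
  · exact congrArg₂ (· * ·) (e.degree_eq x).symm (e.degree_eq y).symm

lemma nonempty_iso_comap_map {V : Type*} [Fintype V] (G : SimpleGraph V) (ψ : V ↪ ℕ)
    (hψ : ∀ x, ψ x < v) (hcard : Fintype.card V = v) :
    Nonempty (G ≃g (G.map ψ).comap (Fin.val : Fin v → ℕ)) := by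
  have hinj : Function.Injective fun x => (⟨ψ x, hψ x⟩ : Fin v) := fun x y hxy =>
    ψ.injective (Fin.mk.inj_iff.1 hxy)
  have hbij := (Fintype.bijective_iff_injective_and_card _).2
    ⟨hinj, hcard.trans (Fintype.card_fin v).symm⟩
  exact ⟨⟨Equiv.ofBijective _ hbij, map_adj_apply⟩⟩

lemma nonempty_iso_of_table {V : Type*} [Finite V] {G H : SimpleGraph V} (p : V → V)
    (hp : Function.Injective p) (h : ∀ a b, H.Adj (p a) (p b) ↔ G.Adj a b) :
    Nonempty (H ≃g G) :=
  ⟨(⟨Equiv.ofBijective p (Finite.injective_iff_bijective.1 hp), h _ _⟩ : G ≃g H).symm⟩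

/-- The graph obtained from a theta graph with a path `0, 2 * m, 2` by adding the edges in `S`. -/
abbrev thetaExtension (m : ℕ) (S : List (ℕ × ℕ)) : SimpleGraph (Fin (2 * m + 1)) :=
  finGraph (2 * m + 1) (S ++ thetaEdges m 1)

/-- Representatives of the isomorphism classes among `survivors 4 1`. -/
def representatives₉ : Fin 2 → List (ℕ × ℕ) :=
  ![[(4, 7), (0, 5)], [(6, 3), (4, 7)]]

/-- Representatives of the isomorphism classes among `survivors 6 1`. -/
def representatives₁₃ : Fin 5 → List (ℕ × ℕ) :=
  ![[(6, 11), (0, 9), (0, 7)], [(6, 11), (6, 9), (0, 7)], [(10, 5), (4, 9), (4, 7)],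
    [(8, 3), (6, 3), (4, 9)], [(8, 3), (6, 9), (4, 9)]]

/-- The 2-coloring by parity, in which the vertex `2 * m` off the cycle has the odd color. -/
def parityColor (m : ℕ) (a : Fin (2 * m + 1)) : Fin 2 :=
  Fin.ofNat 2 (a + a / (2 * m))

set_option maxRecDepth 100000 in
lemma isOddlyRBipancyclic_representatives₉ (i : Fin 2) :
    IsOddlyRBipancyclic (thetaExtension 4 (representatives₉ i)) 4 ∧
      (thetaExtension 4 (representatives₉ i)).edgeSet.ncard ≤ 13 := by
  have hL : ∀ i, IsEdgeList (representatives₉ i ++ thetaEdges 4 1) := by decide +kernel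
  have hlt : ∀ i, ∀ e ∈ representatives₉ i ++ thetaEdges 4 1, e.1 < 9 ∧ e.2 < 9 := by
    decide +kernel
  have hcolor : ∀ i a b, (thetaExtension 4 (representatives₉ i)).Adj a b →
      parityColor 4 a ≠ parityColor 4 b := by decide +kernel
  have hdeg : ∀ i a, 2 ≤ (thetaExtension 4 (representatives₉ i)).degree a := by decide +kernel
  have hcount : ∀ i, ∀ k < 9, 4 ≤ k → Even k →
      countCycles k (representatives₉ i ++ thetaEdges 4 1) = 4 := by decide +kernel
  have hlength : ∀ i, (representatives₉ i ++ thetaEdges 4 1).length ≤ 13 := by decide +kernel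
  exact ⟨isOddlyRBipancyclic_finGraph (hL i) (hlt i) _ (hcolor i) (by decide) (hdeg i) (hcount i),
    (ncard_edgeSet_finGraph (hL i) (hlt i)).trans_le (hlength i)⟩

set_option maxRecDepth 100000 in
lemma isOddlyRBipancyclic_representatives₁₃ (i : Fin 5) :
    IsOddlyRBipancyclic (thetaExtension 6 (representatives₁₃ i)) 4 ∧
      (thetaExtension 6 (representatives₁₃ i)).edgeSet.ncard ≤ 17 := by
  have hL : ∀ i, IsEdgeList (representatives₁₃ i ++ thetaEdges 6 1) := by decide +kernel
  have hlt : ∀ i, ∀ e ∈ representatives₁₃ i ++ thetaEdges 6 1, e.1 < 13 ∧ e.2 < 13 := by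
    decide +kernel
  have hcolor : ∀ i a b, (thetaExtension 6 (representatives₁₃ i)).Adj a b →
      parityColor 6 a ≠ parityColor 6 b := by decide +kernel
  have hdeg : ∀ i a, 2 ≤ (thetaExtension 6 (representatives₁₃ i)).degree a := by decide +kernel
  have hcount : ∀ i, ∀ k < 13, 4 ≤ k → Even k →
      countCycles k (representatives₁₃ i ++ thetaEdges 6 1) = 4 := by decide +kernel
  have hlength : ∀ i, (representatives₁₃ i ++ thetaEdges 6 1).length ≤ 17 := by decide +kernel
  exact ⟨isOddlyRBipancyclic_finGraph (hL i) (hlt i) _ (hcolor i) (by decide) (hdeg i) (hcount i),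
    (ncard_edgeSet_finGraph (hL i) (hlt i)).trans_le (hlength i)⟩

lemma isEmpty_iso_representatives₉ (i j : Fin 2) (hij : i ≠ j) :
    IsEmpty (thetaExtension 4 (representatives₉ i) ≃g thetaExtension 4 (representatives₉ j)) := by
  have hne : ∀ i j, i ≠ j → zagrebIndex (thetaExtension 4 (representatives₉ i)) ≠
      zagrebIndex (thetaExtension 4 (representatives₉ j)) := by decide +kernel
  exact ⟨fun e => hne i j hij (zagrebIndex_eq_of_iso e)⟩

lemma isEmpty_iso_representatives₁₃ (i j : Fin 5) (hij : i ≠ j) :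
    IsEmpty (thetaExtension 6 (representatives₁₃ i) ≃g thetaExtension 6 (representatives₁₃ j)) := by
  have hne : ∀ i j, i ≠ j → zagrebIndex (thetaExtension 6 (representatives₁₃ i)) ≠
      zagrebIndex (thetaExtension 6 (representatives₁₃ j)) := by decide +kernel
  exact ⟨fun e => hne i j hij (zagrebIndex_eq_of_iso e)⟩

lemma exists_iso_representatives₉ {S : List (ℕ × ℕ)} (hS : S ∈ survivors 4 1) :
    ∃ i, Nonempty (thetaExtension 4 S ≃g thetaExtension 4 (representatives₉ i)) := by
  simp only [survivors, List.mem_cons, List.not_mem_nil, or_false] at hS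
  rcases hS with rfl | rfl | rfl
  · exact ⟨0, ⟨Iso.refl⟩⟩
  · exact ⟨0, nonempty_iso_of_table ![2, 1, 0, 7, 6, 3, 4, 5, 8]
      (by decide +kernel) (by decide +kernel)⟩
  · exact ⟨1, ⟨Iso.refl⟩⟩

lemma exists_iso_representatives₁₃ {S : List (ℕ × ℕ)} (hS : S ∈ survivors 6 1) :
    ∃ i, Nonempty (thetaExtension 6 S ≃g thetaExtension 6 (representatives₁₃ i)) := by
  simp only [survivors, List.mem_cons, List.not_mem_nil, or_false] at hS
  rcases hS with rfl | rfl | rfl | rfl | rfl | rfl | rfl | rfl | rfl | rfl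
  · exact ⟨0, ⟨Iso.refl⟩⟩
  · exact ⟨1, ⟨Iso.refl⟩⟩
  · exact ⟨0, nonempty_iso_of_table ![2, 1, 0, 11, 10, 9, 8, 3, 4, 5, 6, 7, 12]
      (by decide +kernel) (by decide +kernel)⟩
  · exact ⟨1, nonempty_iso_of_table ![2, 1, 0, 11, 10, 9, 8, 3, 4, 5, 6, 7, 12]
      (by decide +kernel) (by decide +kernel)⟩
  · exact ⟨2, ⟨Iso.refl⟩⟩
  · exact ⟨3, ⟨Iso.refl⟩⟩
  · exact ⟨4, ⟨Iso.refl⟩⟩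
  · exact ⟨2, nonempty_iso_of_table ![2, 1, 0, 11, 10, 5, 6, 7, 8, 9, 4, 3, 12]
      (by decide +kernel) (by decide +kernel)⟩
  · exact ⟨4, nonempty_iso_of_table ![2, 1, 0, 11, 6, 7, 8, 9, 10, 5, 4, 3, 12]
      (by decide +kernel) (by decide +kernel)⟩
  · exact ⟨3, nonempty_iso_of_table ![2, 1, 0, 11, 6, 7, 8, 9, 10, 5, 4, 3, 12]
      (by decide +kernel) (by decide +kernel)⟩

lemma eq_of_mem_survivors {m t : ℕ} {S : List (ℕ × ℕ)} (hS : S ∈ survivors m t) :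
    t = 1 ∧ (m = 4 ∨ m = 6) := by
  unfold survivors at hS
  split at hS
  · simp
  · simp
  · exact absurd hS List.not_mem_nil

variable {V : Type*} [Fintype V] {G : SimpleGraph V}

lemma exists_iso_thetaExtension {m : ℕ} (hG : IsOddlyRBipancyclic G 4)
    (hcard : Fintype.card V = 2 * m + 1) (hm : 2 ≤ m) (hedges : G.edgeSet.ncard ≤ 2 * m + 5) :
    ∃ S ∈ survivors m 1, Nonempty (G ≃g thetaExtension m S) := by
  obtain ⟨t, ψ, ht, htm, hψ, hnormal⟩ := exists_isNormalized hG hcard hm hedges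
  obtain ⟨S, hS, heq⟩ := hnormal.exists_survivor hm (le_eight hG hcard hm hedges) ht htm
  obtain ⟨rfl, -⟩ := eq_of_mem_survivors hS
  have hiso := nonempty_iso_comap_map G ψ hψ hcard
  rw [heq] at hiso
  exact ⟨S, hS, hiso⟩

lemma five_le_card {r : ℕ} (hG : IsOddlyRBipancyclic G r) : 5 ≤ Fintype.card V := by
  obtain ⟨⟨c⟩, hodd, hdeg, -⟩ := hG
  have hpos : 0 < Fintype.card V := hodd.pos
  obtain ⟨x⟩ := Fintype.card_pos_iff.1 hpos
  obtain ⟨y, hxy⟩ : (G.neighborSet x).Nonempty :=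
    Set.nonempty_of_ncard_ne_zero (two_pos.trans_le (hdeg x)).ne'
  have hdisjoint : Disjoint (G.neighborSet x) (G.neighborSet y) := by
    refine Set.disjoint_left.2 fun z hxz hyz => ?_
    have hcxy := c.valid hxy
    have hcxz := c.valid hxz
    have hcyz := c.valid hyz
    omega
  have hunion := Set.ncard_union_eq hdisjoint (Set.toFinite _) (Set.toFinite _)
  have hle := Set.ncard_le_card (G.neighborSet x ∪ G.neighborSet y)
  rw [Nat.card_eq_fintype_card] at hle
  have hx := hdeg x
  have hy := hdeg y
  obtain ⟨m, hm⟩ := hodd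
  omega

end Solutions

end OddlyBipancyclic

theorem oddly_4_bipancyclic_classification :
    (ExactlyNUpToIso 4 2 9 13 ∧
    ExactlyNUpToIso 4 5 13 17) ∧
    (∀ (V : Type) [Fintype V] (G : SimpleGraph V),
      IsOddlyRBipancyclic G 4 → G.edgeSet.ncard ≤ Fintype.card V + 4 →
      Fintype.card V ∈ ({9, 13} : Set ℕ)) := by
  open OddlyBipancyclic in
  refine ⟨⟨⟨_, isEmpty_iso_representatives₉, isOddlyRBipancyclic_representatives₉, ?_⟩,
    ⟨_, isEmpty_iso_representatives₁₃, isOddlyRBipancyclic_representatives₁₃, ?_⟩⟩, ?_⟩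
  · intro W _ G hcard hedges hG
    obtain ⟨S, hS, ⟨e⟩⟩ := exists_iso_thetaExtension (m := 4) hG hcard (by norm_num) hedges
    obtain ⟨i, ⟨e'⟩⟩ := exists_iso_representatives₉ hS
    exact ⟨i, ⟨e.trans e'⟩⟩
  · intro W _ G hcard hedges hG
    obtain ⟨S, hS, ⟨e⟩⟩ := exists_iso_thetaExtension (m := 6) hG hcard (by norm_num) hedges
    obtain ⟨i, ⟨e'⟩⟩ := exists_iso_representatives₁₃ hS
    exact ⟨i, ⟨e.trans e'⟩⟩
  · intro V _ G hG hedges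
    obtain ⟨m, hm⟩ := hG.2.1
    have hcard := five_le_card hG
    obtain ⟨S, hS, -⟩ := exists_iso_thetaExtension hG hm (by omega) (by omega)
    rcases (eq_of_mem_survivors hS).2 with rfl | rfl <;> simp [hm]
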